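/- arXiv:math/0610310 — 7 statements merged into one kernel-verified Lean document; each statement's English description precedes it below -/
import Mathlib

section
/- Let G be a group, μ ∈ G an element such that G is generated by its commutator subgroup [G,G] together with μ. If ρ : G → SL(2,ℂ) is an irreducible metabelian representation, then trace(ρ(μ)) = 0. -/
/-!
Write `M = ρ μ`. A common eigenvector of `ρ([G,G])` and `M` would be an eigenvector of all of
`ρ(G)` (`eigenvector_of_closure`), so irreducibility forbids it. Since `M` has an eigenvector,
some `A = ρ a` with `a ∈ [G,G]` is not scalar. An eigenvector `v` of `A` is then an eigenvector of
everything commuting with `A` (`eigenvector_of_commute`), in particular of `ρ([G,G])`.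
As `[G,G]` is normal, `M v` and `M² v` are again common eigenvectors of `ρ([G,G])`, while `v` and
`M v` are independent by irreducibility. Cayley–Hamilton gives `M² v = t • M v - v` with
`t = trace M`. If `t ≠ 0`, then `v`, `M v` and `t • M v - v` are all eigenvectors of `A`, which
forces their eigenvalues to coincide, so that `A` is scalar: a contradiction.
-/

open Matrix

/-- The vanishing determinant `v 0 * w 1 - v 1 * w 0` expresses that `w` is parallel to `v`. -/
lemma parallel_of_det_eq_zero {v w : Fin 2 → ℂ} (hv : v ≠ 0)
    (hd : v 0 * w 1 - v 1 * w 0 = 0) : ∃ c : ℂ, w = c • v := by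
  by_cases h0 : v 0 = 0
  · have h1 : v 1 ≠ 0 := by
      intro h1
      apply hv
      ext i
      fin_cases i <;> simp [h0, h1]
    have hw : w 0 = 0 := by simpa [h0, h1] using hd
    refine ⟨w 1 / v 1, ?_⟩
    ext i
    fin_cases i
    · simp [h0, hw]
    · simp [h1]
  · refine ⟨w 0 / v 0, ?_⟩
    ext i
    fin_cases i
    · simp [h0]
    · simp only [Fin.mk_one, Pi.smul_apply, smul_eq_mul]
      field_simp
      linear_combination hd

lemma eq_smul_one_of_eigenvectors {A : Matrix (Fin 2) (Fin 2) ℂ} {v w : Fin 2 → ℂ} {l : ℂ}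
    (hv : A *ᵥ v = l • v) (hw : A *ᵥ w = l • w) (hd : v 0 * w 1 - v 1 * w 0 ≠ 0) :
    A = l • (1 : Matrix (Fin 2) (Fin 2) ℂ) := by
  have v0 := congrFun hv 0
  have v1 := congrFun hv 1
  have w0 := congrFun hw 0
  have w1 := congrFun hw 1
  simp only [mulVec, dotProduct, Fin.sum_univ_two, Pi.smul_apply, smul_eq_mul] at v0 v1 w0 w1
  ext i j
  apply mul_right_cancel₀ hd
  fin_cases i <;> fin_cases j <;> simp [-mul_eq_mul_right_iff, -mul_eq_zero]
  · linear_combination w 1 * v0 - v 1 * w0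
  · linear_combination v 0 * w0 - w 0 * v0
  · linear_combination w 1 * v1 - v 1 * w1
  · linear_combination v 0 * w1 - w 0 * v1

/-- The eigenspaces of a nonscalar `2 × 2` matrix are lines, hence they consist of eigenvectors of
every matrix commuting with it. -/
lemma eigenvector_of_commute {A B : Matrix (Fin 2) (Fin 2) ℂ} {v : Fin 2 → ℂ} {l : ℂ}
    (hA : ∀ c : ℂ, A ≠ c • (1 : Matrix (Fin 2) (Fin 2) ℂ)) (hv0 : v ≠ 0)
    (hv : A *ᵥ v = l • v) (hAB : A * B = B * A) : ∃ c : ℂ, B *ᵥ v = c • v := by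
  apply parallel_of_det_eq_zero hv0
  by_contra hd
  refine hA l (eq_smul_one_of_eigenvectors hv ?_ hd)
  rw [mulVec_mulVec, hAB, ← mulVec_mulVec, hv, mulVec_smul]

lemma exists_eigenvector (A : Matrix (Fin 2) (Fin 2) ℂ) :
    ∃ (l : ℂ) (v : Fin 2 → ℂ), v ≠ 0 ∧ A *ᵥ v = l • v := by
  obtain ⟨l, hl⟩ := Module.End.exists_eigenvalue (Matrix.toLin' A)
  obtain ⟨v, hv⟩ := hl.exists_hasEigenvector
  exact ⟨l, v, hv.2, by simpa using hv.apply_eq_smul⟩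

lemma coe_map_mul {G : Type*} [Group G] (ρ : G →* SpecialLinearGroup (Fin 2) ℂ) (x y : G) :
    (ρ (x * y) : Matrix (Fin 2) (Fin 2) ℂ) =
      (ρ x : Matrix (Fin 2) (Fin 2) ℂ) * (ρ y : Matrix (Fin 2) (Fin 2) ℂ) := by
  rw [map_mul]
  rfl

lemma eigenvector_of_closure {G : Type*} [Group G] {S : Set G}
    (hS : Subgroup.closure S = ⊤) (ρ : G →* SpecialLinearGroup (Fin 2) ℂ)
    {v : Fin 2 → ℂ} (hv0 : v ≠ 0)
    (hv : ∀ g ∈ S, ∃ c : ℂ, (ρ g : Matrix (Fin 2) (Fin 2) ℂ) *ᵥ v = c • v) (g : G) :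
    ∃ c : ℂ, (ρ g : Matrix (Fin 2) (Fin 2) ℂ) *ᵥ v = c • v := by
  have hg : g ∈ Subgroup.closure S := hS ▸ Subgroup.mem_top g
  induction hg using Subgroup.closure_induction with
  | mem x hx => exact hv x hx
  | one => exact ⟨1, by simp⟩
  | mul x y _ _ hx hy =>
    obtain ⟨c, hc⟩ := hx
    obtain ⟨d, hd⟩ := hy
    refine ⟨d * c, ?_⟩
    rw [coe_map_mul, ← mulVec_mulVec, hd, mulVec_smul, hc, smul_smul]
  | inv x _ hx =>
    obtain ⟨c, hc⟩ := hx
    have key : v = c • ((ρ x⁻¹ : Matrix (Fin 2) (Fin 2) ℂ) *ᵥ v) := by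
      rw [← mulVec_smul, ← hc, mulVec_mulVec, ← coe_map_mul]
      simp
    have hc0 : c ≠ 0 := by
      rintro rfl
      exact hv0 (by simpa using key)
    refine ⟨c⁻¹, ?_⟩
    conv_rhs => rw [key]
    rw [smul_smul, inv_mul_cancel₀ hc0, one_smul]

/-- The Cayley–Hamilton theorem for a matrix of determinant one, applied to a vector. -/
lemma mulVec_mulVec_eq (M : SpecialLinearGroup (Fin 2) ℂ) (v : Fin 2 → ℂ) :
    (M : Matrix (Fin 2) (Fin 2) ℂ) *ᵥ ((M : Matrix (Fin 2) (Fin 2) ℂ) *ᵥ v) =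
      (M : Matrix (Fin 2) (Fin 2) ℂ).trace • ((M : Matrix (Fin 2) (Fin 2) ℂ) *ᵥ v) - v := by
  have h := M.det_coe
  rw [det_fin_two] at h
  ext i
  fin_cases i <;>
    simp [mulVec, dotProduct, Fin.sum_univ_two, trace_fin_two]
  · linear_combination -v 0 * h
  · linear_combination -v 1 * h

/-- If `G` is generated by its commutator subgroup together with `μ`,
then any irreducible metabelian representation `ρ : G → SL(2,ℂ)` satisfies
`trace (ρ μ) = 0`. -/
theorem irreducible_metabelian_trace_meridian_eq_zero
    {G : Type*} [Group G] (μ : G)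
    (hgen : Subgroup.closure ((commutator G : Set G) ∪ {μ}) = ⊤)
    (ρ : G →* Matrix.SpecialLinearGroup (Fin 2) ℂ)
    (hirr : ¬ ∃ v : Fin 2 → ℂ, v ≠ 0 ∧
      ∀ g : G, ∃ c : ℂ, (ρ g : Matrix (Fin 2) (Fin 2) ℂ).mulVec v = c • v)
    (hmet : ∀ a ∈ commutator G, ∀ b ∈ commutator G, ρ a * ρ b = ρ b * ρ a) :
    Matrix.trace (ρ μ : Matrix (Fin 2) (Fin 2) ℂ) = 0 := by
  -- The only way irreducibility enters: `[G,G]` and `μ` have no common eigenvector.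
  have hcommon : ∀ v : Fin 2 → ℂ, v ≠ 0 →
      (∀ a ∈ commutator G, ∃ c : ℂ, (ρ a : Matrix (Fin 2) (Fin 2) ℂ) *ᵥ v = c • v) →
      ¬ ∃ c : ℂ, (ρ μ : Matrix (Fin 2) (Fin 2) ℂ) *ᵥ v = c • v := by
    intro v hv0 hv hμ
    refine hirr ⟨v, hv0, eigenvector_of_closure hgen ρ hv0 ?_⟩
    rintro g (hg | rfl)
    · exact hv g hg
    · exact hμ
  obtain ⟨a, ha, hA⟩ : ∃ a ∈ commutator G, ∀ c : ℂ,
      (ρ a : Matrix (Fin 2) (Fin 2) ℂ) ≠ c • (1 : Matrix (Fin 2) (Fin 2) ℂ) := by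
    by_contra! hscal
    obtain ⟨l, v, hv0, hv⟩ := exists_eigenvector (ρ μ : Matrix (Fin 2) (Fin 2) ℂ)
    refine hcommon v hv0 (fun a ha => ?_) ⟨l, hv⟩
    obtain ⟨c, hc⟩ := hscal a ha
    exact ⟨c, by rw [hc, smul_mulVec, one_mulVec]⟩
  obtain ⟨l, v, hv0, hv⟩ := exists_eigenvector (ρ a : Matrix (Fin 2) (Fin 2) ℂ)
  have hvG : ∀ b ∈ commutator G, ∃ c : ℂ,
      (ρ b : Matrix (Fin 2) (Fin 2) ℂ) *ᵥ v = c • v := by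
    intro b hb
    refine eigenvector_of_commute hA hv0 hv ?_
    exact congrArg Subtype.val (hmet a ha b hb)
  -- Normality of `[G,G]`: `ρ μ` preserves the set of common eigenvectors of `ρ([G,G])`.
  have hstep : ∀ u : Fin 2 → ℂ,
      (∀ b ∈ commutator G, ∃ c : ℂ, (ρ b : Matrix (Fin 2) (Fin 2) ℂ) *ᵥ u = c • u) →
      ∀ b ∈ commutator G, ∃ c : ℂ, (ρ b : Matrix (Fin 2) (Fin 2) ℂ) *ᵥ
        ((ρ μ : Matrix (Fin 2) (Fin 2) ℂ) *ᵥ u) =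
          c • ((ρ μ : Matrix (Fin 2) (Fin 2) ℂ) *ᵥ u) := by
    intro u hu b hb
    have hb' : μ⁻¹ * b * μ ∈ commutator G := by
      simpa using (inferInstance : (commutator G).Normal).conj_mem b hb μ⁻¹
    obtain ⟨c, hc⟩ := hu _ hb'
    refine ⟨c, ?_⟩
    rw [← mulVec_smul, ← hc, mulVec_mulVec, mulVec_mulVec, ← coe_map_mul, ← coe_map_mul,
      show μ * (μ⁻¹ * b * μ) = b * μ by group]
  have hd : v 0 * ((ρ μ : Matrix (Fin 2) (Fin 2) ℂ) *ᵥ v) 1 -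
      v 1 * ((ρ μ : Matrix (Fin 2) (Fin 2) ℂ) *ᵥ v) 0 ≠ 0 := fun h =>
    hcommon v hv0 hvG (parallel_of_det_eq_zero hv0 h)
  have hwG := hstep v hvG
  obtain ⟨m, hm⟩ := hwG a ha
  obtain ⟨k, hk⟩ := hstep _ hwG a ha
  rw [mulVec_mulVec_eq, mulVec_sub, mulVec_smul, hv, hm] at hk
  generalize (ρ μ : Matrix (Fin 2) (Fin 2) ℂ) *ᵥ v = w at *
  generalize (ρ μ : Matrix (Fin 2) (Fin 2) ℂ).trace = t at *
  have h0 := congrFun hk 0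
  have h1 := congrFun hk 1
  simp only [Pi.sub_apply, Pi.smul_apply, smul_eq_mul] at h0 h1
  -- Compare coefficients of `v` and of `w` in `t • m • w - l • v = k • (t • w - v)`.
  have hkl : k = l := by
    apply mul_right_cancel₀ hd
    linear_combination w 1 * h0 - w 0 * h1
  have htm : t * (m - k) = 0 := by
    apply mul_right_cancel₀ hd
    linear_combination v 0 * h1 - v 1 * h0
  rcases mul_eq_zero.mp htm with h | h
  · exact h
  · have hml : m = l := by rw [← hkl]; exact sub_eq_zero.mp h
    subst hml
    exact absurd (eq_smul_one_of_eigenvectors hv hm hd) (hA m)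
end

section
/- Every abelian subgroup H of SL(2,ℂ) is conjugate into one of the two standard maximal abelian subgroups: there exists P ∈ SL(2,ℂ) such that either P h P⁻¹ is a diagonal matrix for every h ∈ H, or P h P⁻¹ is of the form ±[[1, ω],[0, 1]] for some ω ∈ ℂ for every h ∈ H. -/
/-!
If every element of `H` is diagonal there is nothing to prove. Otherwise pick a non-diagonal
`g ∈ H`, which is in particular non-scalar; then `H` lies in the centralizer of `g`, so it is enough
to conjugate that centralizer. A left eigenvector of `g` gives a conjugate `[[a, b], [0, d]]`
(`exists_conj_upper`). If `a ≠ d`, a unipotent conjugation removes `b`, and the centralizer of a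
diagonal matrix with distinct entries consists of diagonal matrices. If `a = d`, then `b ≠ 0`
because `g` is not scalar, and matrices commuting with it have the form `[[x, y], [0, x]]`; the
determinant condition gives `x = ±1`.
-/

open Matrix

local notation "SL2" => Matrix.SpecialLinearGroup (Fin 2) ℂ

theorem conj_entries (Q k : SL2) (i : Fin 2) :
    (Q * k * Q⁻¹) i 0 = (Q i 0 * k 0 0 + Q i 1 * k 1 0) * Q 1 1 -
      (Q i 0 * k 0 1 + Q i 1 * k 1 1) * Q 1 0 ∧
    (Q * k * Q⁻¹) i 1 = (Q i 0 * k 0 1 + Q i 1 * k 1 1) * Q 0 0 -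
      (Q i 0 * k 0 0 + Q i 1 * k 1 0) * Q 0 1 := by
  rw [Matrix.SpecialLinearGroup.coe_mul, Matrix.SpecialLinearGroup.coe_mul,
    Matrix.SpecialLinearGroup.coe_inv, adjugate_fin_two]
  constructor
  · simp only [Matrix.mul_apply, Fin.sum_univ_two, of_apply, cons_val_zero, cons_val_one]
    ring
  · simp only [Matrix.mul_apply, Fin.sum_univ_two, of_apply, cons_val_zero, cons_val_one]
    ring

theorem exists_entries (a b c d : ℂ) (hdet : a * d - b * c = 1) :
    ∃ Q : SL2, Q 0 0 = a ∧ Q 0 1 = b ∧ Q 1 0 = c ∧ Q 1 1 = d :=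
  ⟨⟨!![a, b; c, d], by rw [det_fin_two_of, hdet]⟩, rfl, rfl, rfl, rfl⟩

theorem exists_conj_upper (g : SL2) : ∃ P : SL2, (P * g * P⁻¹) 1 0 = 0 := by
  by_cases hc : g 1 0 = 0
  · exact ⟨1, by simpa using hc⟩
  · -- `(1, s)` is a left eigenvector of `g` exactly when `s` solves this quadratic equation.
    obtain ⟨r, hr⟩ := IsAlgClosed.exists_eq_mul_self (discrim (g 1 0) (g 0 0 - g 1 1) (-g 0 1))
    obtain ⟨s, hs⟩ := exists_quadratic_eq_zero hc ⟨r, hr⟩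
    obtain ⟨P, p00, p01, p10, p11⟩ := exists_entries 0 (-1) 1 s (by ring)
    refine ⟨P, ?_⟩
    rw [(conj_entries P g 1).1, p10, p11]
    linear_combination hs

theorem commute_entries {g h : SL2} (hgh : Commute h g) :
    h 0 1 * g 1 0 = g 0 1 * h 1 0 ∧
    h 0 0 * g 0 1 + h 0 1 * g 1 1 = g 0 0 * h 0 1 + g 0 1 * h 1 1 ∧
    h 1 0 * g 0 0 + h 1 1 * g 1 0 = g 1 0 * h 0 0 + g 1 1 * h 1 0 := by
  have e : (h : Matrix (Fin 2) (Fin 2) ℂ) * g = g * h := by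
    simpa using congrArg (fun m : SL2 => (m : Matrix (Fin 2) (Fin 2) ℂ)) hgh.eq
  have e00 := congrFun (congrFun e 0) 0
  have e01 := congrFun (congrFun e 0) 1
  have e10 := congrFun (congrFun e 1) 0
  simp only [mul_apply, Fin.sum_univ_two] at e00 e01 e10
  exact ⟨by linear_combination e00, e01, e10⟩

/-- The centralizer of a diagonal matrix with distinct diagonal entries is diagonal. -/
theorem isDiag_of_commute {g h : SL2} (hgh : Commute h g) (h01 : g 0 1 = 0) (h10 : g 1 0 = 0)
    (hne : g 0 0 ≠ g 1 1) : (h : Matrix (Fin 2) (Fin 2) ℂ).IsDiag := by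
  obtain ⟨-, e01, e10⟩ := commute_entries hgh
  have hd : g 0 0 - g 1 1 ≠ 0 := sub_ne_zero.2 hne
  rw [h01] at e01
  rw [h10] at e10
  have k01 : h 0 1 = 0 :=
    (mul_eq_zero.1 (by linear_combination -e01 : (g 0 0 - g 1 1) * h 0 1 = 0)).resolve_left hd
  have k10 : h 1 0 = 0 :=
    (mul_eq_zero.1 (by linear_combination e10 : (g 0 0 - g 1 1) * h 1 0 = 0)).resolve_left hd
  intro i j hij
  fin_cases i <;> fin_cases j <;> first | exact absurd rfl hij | assumption

/-- The centralizer of a non-scalar upper triangular matrix with equal diagonal entries lies in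
`±Para`. -/
theorem para_of_commute {g h : SL2} (hgh : Commute h g) (h01 : g 0 1 ≠ 0) (h10 : g 1 0 = 0)
    (heq : g 0 0 = g 1 1) :
    ∃ ω : ℂ, (h : Matrix (Fin 2) (Fin 2) ℂ) = !![1, ω; 0, 1] ∨
      (h : Matrix (Fin 2) (Fin 2) ℂ) = !![-1, ω; 0, -1] := by
  obtain ⟨e00, e01, -⟩ := commute_entries hgh
  rw [h10] at e00
  rw [heq] at e01
  have k10 : h 1 0 = 0 :=
    (mul_eq_zero.1 (by linear_combination -e00 : g 0 1 * h 1 0 = 0)).resolve_left h01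
  have k : h 0 0 - h 1 1 = 0 :=
    (mul_eq_zero.1 (by linear_combination e01 : g 0 1 * (h 0 0 - h 1 1) = 0)).resolve_left h01
  have k00 : h 0 0 = h 1 1 := sub_eq_zero.1 k
  have hdet := h.det_coe
  rw [det_fin_two, k10, k00, mul_zero, sub_zero] at hdet
  refine ⟨h 0 1, (mul_self_eq_one_iff.1 hdet).imp (fun hx => ?_) (fun hx => ?_)⟩ <;>
  · exact (eta_fin_two _).trans (by rw [k10, k00, hx])

theorem commute_conj {g h : SL2} (P : SL2) (hgh : Commute h g) :
    Commute (P * h * P⁻¹) (P * g * P⁻¹) :=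
  (Commute.conj_iff P).2 hgh

/-- Every abelian subgroup of `SL(2,ℂ)` is conjugate into the diagonal
subgroup `Hyp` or into the subgroup `±Para` of matrices `±[[1, ω],[0, 1]]`. -/
theorem abelian_subgroup_conjugate_into_Hyp_or_Para
    (H : Subgroup (Matrix.SpecialLinearGroup (Fin 2) ℂ))
    (hab : ∀ a ∈ H, ∀ b ∈ H, a * b = b * a) :
    ∃ P : Matrix.SpecialLinearGroup (Fin 2) ℂ,
      (∀ h ∈ H, ((P * h * P⁻¹ : Matrix.SpecialLinearGroup (Fin 2) ℂ) :
          Matrix (Fin 2) (Fin 2) ℂ).IsDiag) ∨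
      (∀ h ∈ H, ∃ ω : ℂ,
        ((P * h * P⁻¹ : Matrix.SpecialLinearGroup (Fin 2) ℂ) :
            Matrix (Fin 2) (Fin 2) ℂ) = !![1, ω; 0, 1] ∨
        ((P * h * P⁻¹ : Matrix.SpecialLinearGroup (Fin 2) ℂ) :
            Matrix (Fin 2) (Fin 2) ℂ) = !![-1, ω; 0, -1]) := by
  by_cases hall : ∀ h ∈ H, (h : Matrix (Fin 2) (Fin 2) ℂ).IsDiag
  · exact ⟨1, Or.inl fun h hh => by simpa using hall h hh⟩
  push Not at hall
  obtain ⟨g, hg, hgd⟩ := hall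
  obtain ⟨P, hP⟩ := exists_conj_upper g
  have hcomm : ∀ h ∈ H, Commute h g := fun h hh => hab h hh g hg
  by_cases heq : (P * g * P⁻¹) 0 0 = (P * g * P⁻¹) 1 1
  · refine ⟨P, Or.inr fun h hh => para_of_commute (commute_conj P (hcomm h hh)) ?_ hP heq⟩
    -- Otherwise the conjugate of `g` would be scalar, hence so would `g`, contrary to `hgd`.
    intro h01
    have hs : Matrix.scalar (Fin 2) ((P * g * P⁻¹) 1 1) =
        ((P * g * P⁻¹ : SL2) : Matrix (Fin 2) (Fin 2) ℂ) := by
      rw [eta_fin_two ((P * g * P⁻¹ : SL2) : Matrix (Fin 2) (Fin 2) ℂ), hP, heq, h01]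
      ext i j
      fin_cases i <;> fin_cases j <;> simp
    have hc : P * g * P⁻¹ ∈ Subgroup.center SL2 := by
      rw [Matrix.SpecialLinearGroup.mem_center_iff]
      refine ⟨_, ?_, hs⟩
      have := (P * g * P⁻¹).det_coe
      rw [← hs] at this
      simpa using this
    have hgc : g ∈ Subgroup.center SL2 := by
      have := (Subgroup.center SL2).normal_of_characteristic.conj_mem _ hc P⁻¹
      simpa [mul_assoc] using this
    obtain ⟨r, -, hr⟩ := Matrix.SpecialLinearGroup.mem_center_iff.1 hgc
    exact hgd (hr ▸ isDiag_diagonal _)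
  · -- Conjugating `[[a, b], [0, d]]` by `[[1, t], [0, 1]]` changes `b` to `b - t (a - d)`.
    generalize hk : P * g * P⁻¹ = k at hP heq
    have hd : k 0 0 - k 1 1 ≠ 0 := sub_ne_zero.2 heq
    obtain ⟨Q, q00, q01, q10, q11⟩ := exists_entries 1 (k 0 1 / (k 0 0 - k 1 1)) 0 1 (by ring)
    have hQ : Q * P * g * (Q * P)⁻¹ = Q * k * Q⁻¹ := by rw [← hk]; group
    refine ⟨Q * P, Or.inl fun h hh => isDiag_of_commute (commute_conj (Q * P) (hcomm h hh)) ?_ ?_ ?_⟩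
    · rw [hQ, (conj_entries Q k 0).2, q00, q01, hP]
      field_simp
      ring
    · rw [hQ, (conj_entries Q k 1).1, q10, q11, hP]
      ring
    · rw [hQ, (conj_entries Q k 0).1, (conj_entries Q k 1).2, q00, q01, q10, q11, hP]
      simpa using heq
end

section
/- Let n ≥ 1 and let λ, λ' : Fin n → ℂ* be tuples of nonzero complex numbers. Set A = [[0, 1],[−1, 0]] ∈ SL(2,ℂ) and Dᵢ = diag(λᵢ, λᵢ⁻¹), Dᵢ' = diag(λᵢ', λᵢ'⁻¹). Then there exists P ∈ SL(2,ℂ) with P A P⁻¹ = A and P Dᵢ P⁻¹ = Dᵢ' for all i, if and only if λ' = λ or λᵢ' = λᵢ⁻¹ for all i. -/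
/-! The first row of `P Dᵢ = Dᵢ' P` says `a λᵢ = λᵢ' a` and `b λᵢ⁻¹ = λᵢ' b`, where `(a, b)` is the
first row of `P`. As `det P = 1`, either `a ≠ 0`, which forces `λ' = λ`, or `b ≠ 0`, which forces
`λᵢ' = λᵢ⁻¹`; which of the two applies does not depend on `i`. Conversely, `P = 1` and `P = A` realize
the two cases. -/

/-- For `P` of determinant one, conjugation by `P` can be written without the inverse. -/
lemma conj_eq_iff_of_det_eq_one {P : Matrix (Fin 2) (Fin 2) ℂ} (hP : P.det = 1)
    (M N : Matrix (Fin 2) (Fin 2) ℂ) : P * M * P⁻¹ = N ↔ P * M = N * P := by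
  have hu : IsUnit P.det := by simp [hP]
  constructor
  · rintro rfl
    rw [Matrix.nonsing_inv_mul_cancel_right _ _ hu]
  · intro h
    rw [h, Matrix.mul_nonsing_inv_cancel_right _ _ hu]

/-- Two candidate metabelian representations, given by the diagonal
matrices `Dᵢ = diag(λᵢ, λᵢ⁻¹)` resp. `Dᵢ' = diag(λᵢ', λᵢ'⁻¹)` on the generators and
by `A = [[0,1],[−1,0]]` on the meridian, are conjugate iff `λ' = λ` or
`λᵢ' = λᵢ⁻¹` for all `i`. -/
theorem conjugacy_of_metabelian_candidates
    (n : ℕ) (hn : 1 ≤ n) (l l' : Fin n → ℂ)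
    (hl : ∀ i, l i ≠ 0) (hl' : ∀ i, l' i ≠ 0) :
    (∃ P : Matrix (Fin 2) (Fin 2) ℂ, P.det = 1 ∧
      P * !![0, 1; -1, 0] * P⁻¹ = !![0, 1; -1, 0] ∧
      ∀ i, P * !![l i, 0; 0, (l i)⁻¹] * P⁻¹ = !![l' i, 0; 0, (l' i)⁻¹]) ↔
    (l' = l ∨ ∀ i, l' i = (l i)⁻¹) := by
  constructor
  · rintro ⟨P, hP, -, hD⟩
    simp only [conj_eq_iff_of_det_eq_one hP] at hD
    have h00 : ∀ i, P 0 0 * l i = l' i * P 0 0 := fun i => by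
      simpa [Matrix.mul_apply, Fin.sum_univ_two] using congrFun₂ (hD i) 0 0
    have h01 : ∀ i, P 0 1 * (l i)⁻¹ = l' i * P 0 1 := fun i => by
      simpa [Matrix.mul_apply, Fin.sum_univ_two] using congrFun₂ (hD i) 0 1
    by_cases ha : P 0 0 = 0
    · right
      intro i
      have hb : P 0 1 ≠ 0 := by
        intro hb
        simp [Matrix.det_fin_two, ha, hb] at hP
      apply mul_right_cancel₀ hb
      rw [← h01 i, mul_comm]
    · left
      funext i
      apply mul_right_cancel₀ ha
      rw [← h00 i, mul_comm]
  · rintro (rfl | h)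
    · exact ⟨1, by simp, by simp, by simp⟩
    · have hdet : (!![0, 1; -1, 0] : Matrix (Fin 2) (Fin 2) ℂ).det = 1 := by
        simp [Matrix.det_fin_two]
      refine ⟨!![0, 1; -1, 0], hdet, ?_, fun i => ?_⟩
      · rw [conj_eq_iff_of_det_eq_one hdet]
      · rw [conj_eq_iff_of_det_eq_one hdet, h i]
        simp
end

section
/- Let n ≥ 1 and let W be an n×n integer matrix with det(W) ≠ 0. Then the set S = { λ : Fin n → ℂ | λⱼ ≠ 0 for all j and ∏ⱼ λⱼ^{W(i,j)} = 1 for every i } is finite and has exactly |det(W)| elements. -/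
/-!
The solutions of the system are the characters of a finite abelian group. Let `N ⊆ ℤⁿ` be the
lattice spanned by the rows of `W`. A tuple of nonzero complex numbers `l` is the same as a
homomorphism `ℤⁿ → ℂˣ` (sending `eⱼ` to `lⱼ`), and the equations say that it kills every row of
`W`, so that it factors through `ℤⁿ ⧸ N`. Since `det W ≠ 0`, the rows form a basis of `N`, hence
`ℤⁿ ⧸ N` has exactly `|det W|` elements. As `ℂ` contains all roots of unity, a finite abelian
group has as many characters with values in `ℂˣ` as it has elements.
-/

open Module

/-- The lattice in `ℤⁿ` spanned by the rows of `W`. -/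
def rowLattice {n : ℕ} (W : Matrix (Fin n) (Fin n) ℤ) : Submodule ℤ (Fin n → ℤ) :=
  Submodule.span ℤ (Set.range W.row)

lemma card_quotient_rowLattice {n : ℕ} (W : Matrix (Fin n) (Fin n) ℤ) (hW : W.det ≠ 0) :
    Nat.card ((Fin n → ℤ) ⧸ rowLattice W) = W.det.natAbs := by
  have hli : LinearIndependent ℤ W.row := Matrix.linearIndependent_rows_of_det_ne_zero hW
  let bN : Basis (Fin n) ℤ (rowLattice W) := Basis.span hli
  rw [← Submodule.natAbs_det_basis_change (Pi.basisFun ℤ (Fin n)) (rowLattice W) bN]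
  have hrow : ((↑) ∘ bN : Fin n → Fin n → ℤ) = W.row := by
    funext i
    exact congrArg Subtype.val (Basis.span_apply hli i)
  rw [hrow, Pi.basisFun_det]
  rfl

/-- A finite abelian group, written additively, has as many complex characters as elements. -/
lemma card_linearMap_units (Q : Type*) [AddCommGroup Q] [Finite Q] :
    Nat.card (Q →ₗ[ℤ] Additive ℂˣ) = Nat.card Q := by
  have : NeZero (Monoid.exponent (Multiplicative Q)) := ⟨Monoid.exponent_ne_zero_of_finite⟩
  have : NeZero ((Monoid.exponent (Multiplicative Q) : ℕ) : ℂ) :=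
    ⟨Nat.cast_ne_zero.mpr (NeZero.ne _)⟩
  calc Nat.card (Q →ₗ[ℤ] Additive ℂˣ)
      = Nat.card (Q →+ Additive ℂˣ) :=
        Nat.card_congr (addMonoidHomLequivInt (A := Q) (B := Additive ℂˣ) ℤ).symm.toEquiv
    _ = Nat.card (Multiplicative Q →* ℂˣ) :=
        Nat.card_congr AddMonoidHom.toMultiplicativeLeft
    _ = Nat.card (Multiplicative Q) :=
        CommGroup.card_monoidHom_of_hasEnoughRootsOfUnity (Multiplicative Q) ℂ
    _ = Nat.card Q := Nat.card_congr Multiplicative.toAdd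

/-- A homomorphism `ℤⁿ → ℂˣ` is the Laurent monomial map in its values on the standard basis. -/
lemma linearMap_apply_eq_prod {n : ℕ} (f : (Fin n → ℤ) →ₗ[ℤ] Additive ℂˣ) (v : Fin n → ℤ) :
    ((f v).toMul : ℂ) = ∏ j, ((f (Pi.single j 1)).toMul : ℂ) ^ v j := by
  conv_lhs => rw [← (Pi.basisFun ℤ (Fin n)).sum_repr v]
  simp only [map_sum, map_smul, Pi.basisFun_repr, Pi.basisFun_apply, toMul_sum, toMul_zsmul,
    Units.coe_prod, Units.val_zpow_eq_zpow_val]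

/-- Evaluation at the classes of the standard basis identifies the characters of
`ℤⁿ ⧸ rowLattice W` with the solutions. -/
lemma bijective_eval {n : ℕ} (W : Matrix (Fin n) (Fin n) ℤ) :
    ∃ F : (((Fin n → ℤ) ⧸ rowLattice W) →ₗ[ℤ] Additive ℂˣ) →
      {l : Fin n → ℂ | (∀ j, l j ≠ 0) ∧ ∀ i, ∏ j, l j ^ W i j = 1},
      Function.Bijective F := by
  refine ⟨fun χ ↦ ⟨fun j ↦ ((χ.comp (rowLattice W).mkQ (Pi.single j 1)).toMul : ℂ),
    fun j ↦ Units.ne_zero _, fun i ↦ ?_⟩, ?_, ?_⟩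
  · rw [← linearMap_apply_eq_prod (χ.comp (rowLattice W).mkQ) (W i)]
    have hmem : (rowLattice W).mkQ (W i) = 0 :=
      (Submodule.Quotient.mk_eq_zero _).mpr (Submodule.subset_span ⟨i, rfl⟩)
    rw [LinearMap.comp_apply, hmem, map_zero, toMul_zero, Units.val_one]
  · intro χ ψ h
    refine Submodule.linearMap_qext _ ((Pi.basisFun ℤ (Fin n)).ext fun j ↦ ?_)
    have hj := congrFun (Subtype.ext_iff.mp h) j
    rw [Pi.basisFun_apply]
    exact Additive.toMul.injective (Units.ext hj)
  · rintro ⟨l, hl0, hl⟩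
    let f : (Fin n → ℤ) →ₗ[ℤ] Additive ℂˣ :=
      (Pi.basisFun ℤ (Fin n)).constr ℤ fun j ↦ Additive.ofMul (Units.mk0 (l j) (hl0 j))
    have hf (j : Fin n) : ((f (Pi.single j 1)).toMul : ℂ) = l j := by
      have := (Pi.basisFun ℤ (Fin n)).constr_basis ℤ
        (fun j ↦ Additive.ofMul (Units.mk0 (l j) (hl0 j))) j
      rw [Pi.basisFun_apply] at this
      rw [this]
      rfl
    have hker : rowLattice W ≤ LinearMap.ker f := by
      refine Submodule.span_le.mpr ?_
      rintro _ ⟨i, rfl⟩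
      refine LinearMap.mem_ker.mpr (Additive.toMul.injective (Units.ext ?_))
      rw [linearMap_apply_eq_prod]
      simp only [hf]
      exact hl i
    refine ⟨(rowLattice W).liftQ f hker, Subtype.ext (funext fun j ↦ ?_)⟩
    exact hf j

/-- For an `n×n` integer matrix `W` with `det W ≠ 0`, the set of
tuples of nonzero complex numbers satisfying `∏ⱼ λⱼ^{W i j} = 1` for all `i` is
finite of cardinality `|det W|`. -/
theorem card_solution_set_eq_natAbs_det
    (n : ℕ) (hn : 1 ≤ n) (W : Matrix (Fin n) (Fin n) ℤ) (hW : W.det ≠ 0) :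
    ({l : Fin n → ℂ | (∀ j, l j ≠ 0) ∧ ∀ i, ∏ j, l j ^ W i j = 1}).Finite ∧
    ({l : Fin n → ℂ | (∀ j, l j ≠ 0) ∧ ∀ i, ∏ j, l j ^ W i j = 1}).ncard =
      W.det.natAbs := by
  have hQ := card_quotient_rowLattice W hW
  have hdet : W.det.natAbs ≠ 0 := Int.natAbs_ne_zero.mpr hW
  have : Finite ((Fin n → ℤ) ⧸ rowLattice W) := Nat.finite_of_card_ne_zero (hQ ▸ hdet)
  obtain ⟨F, hF⟩ := bijective_eval W
  have hcard : ({l : Fin n → ℂ | (∀ j, l j ≠ 0) ∧ ∀ i, ∏ j, l j ^ W i j = 1}).ncard =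
      W.det.natAbs := by
    rw [← Nat.card_coe_set_eq, ← Nat.card_eq_of_bijective F hF, card_linearMap_units, hQ]
  exact ⟨Set.finite_of_ncard_ne_zero (hcard ▸ hdet), hcard⟩
end

section
/- Let M be the 2×2 matrix over the polynomial ring ℤ[u] given by M = [[−1 − u, −1],[−u, −1]]. Then for every integer n ≥ 1: the (1,1)-entry of Mⁿ is a polynomial of degree n, the (1,2)-entry of Mⁿ is a polynomial of degree n − 1, and the polynomial (Mⁿ)₁₁ + 2·(Mⁿ)₁₂ has degree n. -/
/-!
Write `a`, `b` for the first row of `Mⁿ`. Multiplying by `M` on the right gives the recursion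
`a' = -(X * a) - (a + X * b)`, `b' = -a - b`. If `deg a = n` and `deg b = n - 1`, then `X * a`
is the only term of degree `n + 1` in `a'`, and `a` is the only term of degree `n` in `b'`, so
the two degrees propagate by induction. The third claim follows since `deg (2 * b) < deg a`.
-/

open Polynomial in
/-- The degrees of the first row of `M ^ (k + 1)`; shifting the exponent avoids the truncated
subtraction `n - 1`. -/
lemma degree_first_row (k : ℕ) :
    ((!![-1 - X, -1; -X, -1] ^ (k + 1) : Matrix (Fin 2) (Fin 2) (Polynomial ℤ)) 0 0).degree =
      ((k + 1 : ℕ) : WithBot ℕ) ∧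
    ((!![-1 - X, -1; -X, -1] ^ (k + 1) : Matrix (Fin 2) (Fin 2) (Polynomial ℤ)) 0 1).degree =
      ((k : ℕ) : WithBot ℕ) := by
  induction k with
  | zero =>
    have h : (-1 - X : ℤ[X]) = -(X + C 1) := by rw [C_1]; ring
    constructor
    · simp only [zero_add, pow_one, Matrix.of_apply, Matrix.cons_val_zero]
      rw [h, degree_neg, degree_X_add_C]
      rfl
    · simp
  | succ k ih =>
    obtain ⟨ha, hb⟩ := ih
    rw [pow_succ _ (k + 1)]
    generalize (!![-1 - X, -1; -X, -1] ^ (k + 1) : Matrix (Fin 2) (Fin 2) ℤ[X]) = N at ha hb ⊢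
    have e1 : (N * !![-1 - X, -1; -X, -1] : Matrix (Fin 2) (Fin 2) ℤ[X]) 0 0 =
        -(X * N 0 0) - (N 0 0 + X * N 0 1) := by
      simp [Matrix.mul_apply, Fin.sum_univ_two]; ring
    have e2 : (N * !![-1 - X, -1; -X, -1] : Matrix (Fin 2) (Fin 2) ℤ[X]) 0 1 = -(N 0 0) - N 0 1 := by
      simp [Matrix.mul_apply, Fin.sum_univ_two]; ring
    have hXa : (-(X * N 0 0)).degree = ((k + 1 + 1 : ℕ) : WithBot ℕ) := by
      rw [degree_neg, X_mul, degree_mul_X, ha]; rfl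
    have hXb : (X * N 0 1).degree = ((k + 1 : ℕ) : WithBot ℕ) := by
      rw [X_mul, degree_mul_X, hb]; rfl
    constructor
    · rw [e1, degree_sub_eq_left_of_degree_lt, hXa]
      rw [hXa]
      refine (degree_add_le _ _).trans_lt ?_
      rw [ha, hXb, max_self]
      exact_mod_cast Nat.lt_succ_self _
    · rw [e2, degree_sub_eq_left_of_degree_lt, degree_neg, ha]
      rw [degree_neg, ha, hb]
      exact_mod_cast Nat.lt_succ_self _

open Polynomial in
/-- For `M = [[−1 − u, −1],[−u, −1]]` over `ℤ[u]` and `n ≥ 1`, the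
`(1,1)`-entry of `Mⁿ` has degree `n`, the `(1,2)`-entry has degree `n − 1`, and
`(Mⁿ)₁₁ + 2·(Mⁿ)₁₂` has degree `n`. -/
theorem degrees_of_relator_matrix_power
    (n : ℕ) (hn : 1 ≤ n) :
    ((!![-1 - X, -1; -X, -1] ^ n : Matrix (Fin 2) (Fin 2) (Polynomial ℤ)) 0 0).degree =
      (n : ℕ) ∧
    ((!![-1 - X, -1; -X, -1] ^ n : Matrix (Fin 2) (Fin 2) (Polynomial ℤ)) 0 1).degree =
      ((n - 1 : ℕ) : WithBot ℕ) ∧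
    ((!![-1 - X, -1; -X, -1] ^ n : Matrix (Fin 2) (Fin 2) (Polynomial ℤ)) 0 0 +
        2 * (!![-1 - X, -1; -X, -1] ^ n : Matrix (Fin 2) (Fin 2) (Polynomial ℤ)) 0 1).degree =
      (n : ℕ) := by
  obtain ⟨k, rfl⟩ := Nat.exists_eq_add_of_le' hn
  obtain ⟨ha, hb⟩ := degree_first_row k
  refine ⟨ha, hb, ?_⟩
  rw [degree_add_eq_left_of_degree_lt, ha]
  rw [ha, ← C_ofNat, degree_C_mul two_ne_zero, hb]
  exact_mod_cast Nat.lt_succ_self _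
end

section
/- Let p and q be coprime odd integers with p > |q| > 0. Set e_i = (−1)^{⌊iq/p⌋} for i = 1, …, p − 1, let w = x₁^{e₁} x₂^{e₂} x₁^{e₃} x₂^{e₄} ⋯ x₁^{e_{p−2}} x₂^{e_{p−1}} in the free group on x₁, x₂, and let Γ_{p,q} = ⟨x₁, x₂ | w x₁ w⁻¹ x₂⁻¹⟩ be the corresponding presented group (the knot group of the 2-bridge knot S(p,q)). Then the set of irreducible metabelian representations ρ : Γ_{p,q} → SL(2,ℂ), taken up to conjugation by elements of SL(2,ℂ), is finite and has exactly (p − 1)/2 elements. -/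
/-!
Write `p = 2 n + 1`. Let `ρ` be irreducible and metabelian, `A = ρ x₁`, `B = ρ x₂`. Since `x₂` is
conjugate to `x₁`, the element `T = B A⁻¹` lies in the image of the commutator subgroup, and so does
`A T A⁻¹`; hence these two commute. Irreducibility excludes that `T` is scalar or has a single
eigenline, so `T` is diagonalisable with two distinct eigenlines, which `A` must swap. Up to
conjugation therefore `A = antiDiag 1` and `B = antiDiag r`, where
`antiDiag r = !![0, r; -r⁻¹, 0]` (`exists_conj_antiDiag`).

Antidiagonal matrices of determinant one have square `-1`, so an inverse is a negative and the image
of `w` is `± (A B) ^ n`, whatever the signs `e_i` are (`alternating_prod`). The relation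
`w x₁ = x₂ w` becomes `r ^ p = 1` (`map_twoBridgeRel_eq_one_iff`). Conversely each `p`-th root of
unity `r ≠ 1` gives an irreducible metabelian representation `antiRep`, as `r ^ 2 ≠ 1` and
commutators of monomial matrices are diagonal. The parameters `r` and `r⁻¹` give conjugate
representations, and the trace of `x₁ x₂`, which is `-(r + r⁻¹)`, separates all others. The
`2 n` nontrivial roots of unity thus fall into `n` classes.
-/

/-- The sign `e_i = (−1)^{⌊iq/p⌋}` of the 2-bridge relator, as an integer. -/
def twoBridgeSign (p q i : ℤ) : ℤ :=
  if Even ⌊((i * q : ℤ) : ℚ) / ((p : ℤ) : ℚ)⌋ then 1 else -1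

/-- The word `w = x₁^{e₁} x₂^{e₂} ⋯ x₁^{e_{p−2}} x₂^{e_{p−1}}` in the free group on
two generators (generator `0` is `x₁`, generator `1` is `x₂`). -/
def twoBridgeWord (p q : ℤ) : FreeGroup (Fin 2) :=
  ((List.range (p.toNat - 1)).map fun k =>
    (FreeGroup.of (if k % 2 = 0 then (0 : Fin 2) else 1)) ^
      twoBridgeSign p q ((k : ℤ) + 1)).prod

/-- The relator `w x₁ w⁻¹ x₂⁻¹` of the 2-bridge knot group. -/
def twoBridgeRel (p q : ℤ) : FreeGroup (Fin 2) :=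
  twoBridgeWord p q * FreeGroup.of 0 * (twoBridgeWord p q)⁻¹ * (FreeGroup.of 1)⁻¹

/-- The 2-bridge knot group `Γ_{p,q} = ⟨x₁, x₂ | w x₁ w⁻¹ x₂⁻¹⟩`. -/
abbrev TwoBridgeGroup (p q : ℤ) : Type :=
  PresentedGroup ({twoBridgeRel p q} : Set (FreeGroup (Fin 2)))

/-- A representation into `SL(2,ℂ)` is irreducible if no line of `ℂ²` is invariant
under the whole image. -/
def IsIrreducibleRep {G : Type*} [Group G]
    (ρ : G →* Matrix.SpecialLinearGroup (Fin 2) ℂ) : Prop :=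
  ¬ ∃ v : Fin 2 → ℂ, v ≠ 0 ∧
    ∀ g : G, ∃ c : ℂ, (ρ g : Matrix (Fin 2) (Fin 2) ℂ).mulVec v = c • v

/-- A representation is metabelian if the image of the commutator subgroup is
abelian. -/
def IsMetabelianRep {G : Type*} [Group G]
    (ρ : G →* Matrix.SpecialLinearGroup (Fin 2) ℂ) : Prop :=
  ∀ a ∈ commutator G, ∀ b ∈ commutator G, ρ a * ρ b = ρ b * ρ a

/-- The setoid identifying two representations (satisfying a property `P`)
iff they are conjugate by an element of `SL(2,ℂ)`. -/
def conjSetoid {G : Type*} [Group G]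
    (P : (G →* Matrix.SpecialLinearGroup (Fin 2) ℂ) → Prop) :
    Setoid {ρ : G →* Matrix.SpecialLinearGroup (Fin 2) ℂ // P ρ} where
  r a b := ∃ Q : Matrix.SpecialLinearGroup (Fin 2) ℂ, ∀ g : G, b.1 g = Q * a.1 g * Q⁻¹
  iseqv := by
    constructor
    · intro a; exact ⟨1, fun g => by simp⟩
    · rintro a b ⟨Q, hQ⟩
      exact ⟨Q⁻¹, fun g => by rw [hQ g]; group⟩
    · rintro a b c ⟨Q, hQ⟩ ⟨R, hR⟩
      exact ⟨R * Q, fun g => by rw [hR g, hQ g]; group⟩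

open Matrix

local notation "SL2" => Matrix.SpecialLinearGroup (Fin 2) ℂ
local notation "M2" => Matrix (Fin 2) (Fin 2) ℂ

lemma coe_mul_apply_two (A B : SL2) (i j : Fin 2) :
    ((A * B : SL2) : M2) i j = (A : M2) i 0 * (B : M2) 0 j + (A : M2) i 1 * (B : M2) 1 j := by
  rw [Matrix.SpecialLinearGroup.coe_mul, Matrix.mul_apply, Fin.sum_univ_two]

/-! ### Monomial matrices -/

/-- The antidiagonal matrix with entries `b` and `-b⁻¹`. -/
def antiDiag (b : ℂˣ) : SL2 := ⟨!![0, (b : ℂ); -((b⁻¹ : ℂˣ) : ℂ), 0], by simp⟩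

/-- The diagonal torus of `SL(2,ℂ)`, parametrised by the upper left entry. -/
def diagHom : ℂˣ →* SL2 where
  toFun t := ⟨!![(t : ℂ), 0; 0, ((t⁻¹ : ℂˣ) : ℂ)], by simp⟩
  map_one' := by ext i j; fin_cases i <;> fin_cases j <;> simp
  map_mul' s t := Subtype.ext <| by
    change (!![((s * t : ℂˣ) : ℂ), 0; 0, (((s * t)⁻¹ : ℂˣ) : ℂ)] : M2)
      = !![(s : ℂ), 0; 0, ((s⁻¹ : ℂˣ) : ℂ)] * !![(t : ℂ), 0; 0, ((t⁻¹ : ℂˣ) : ℂ)]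
    simp [mul_comm]

lemma coe_diagHom (t : ℂˣ) : (diagHom t : M2) = !![(t : ℂ), 0; 0, ((t⁻¹ : ℂˣ) : ℂ)] := rfl

lemma coe_antiDiag (b : ℂˣ) : (antiDiag b : M2) = !![0, (b : ℂ); -((b⁻¹ : ℂˣ) : ℂ), 0] := rfl

lemma diagHom_mul_antiDiag (t a : ℂˣ) : diagHom t * antiDiag a = antiDiag (t * a) := by
  ext i j
  fin_cases i <;> fin_cases j <;> simp [coe_mul_apply_two, coe_diagHom, coe_antiDiag, mul_comm]

lemma antiDiag_mul_diagHom (t a : ℂˣ) : antiDiag a * diagHom t = antiDiag (a * t⁻¹) := by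
  ext i j
  fin_cases i <;> fin_cases j <;> simp [coe_mul_apply_two, coe_diagHom, coe_antiDiag, mul_comm]

lemma antiDiag_mul_antiDiag (a b : ℂˣ) : antiDiag a * antiDiag b = diagHom (-(a * b⁻¹)) := by
  ext i j
  fin_cases i <;> fin_cases j <;> simp [coe_mul_apply_two, coe_diagHom, coe_antiDiag, mul_comm]

lemma antiDiag_injective : Function.Injective antiDiag := by
  intro a b h
  have := congrArg (fun M : SL2 => (M : M2) 0 1) h
  exact Units.ext (by simpa [coe_antiDiag] using this)

lemma diagHom_neg_one_mem_center : diagHom (-1) ∈ Subgroup.center SL2 := by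
  rw [Subgroup.mem_center_iff]
  intro g
  ext i j
  fin_cases i <;> fin_cases j <;>
    simp [coe_mul_apply_two, coe_diagHom]

lemma antiDiag_sq_mem_center (a : ℂˣ) : antiDiag a * antiDiag a ∈ Subgroup.center SL2 := by
  rw [antiDiag_mul_antiDiag]
  simpa using diagHom_neg_one_mem_center

/-- The monomial group: diagonal and antidiagonal matrices. -/
def monomialSubgroup : Subgroup SL2 where
  carrier := {M | (∃ t, M = diagHom t) ∨ ∃ a, M = antiDiag a}
  one_mem' := Or.inl ⟨1, (map_one _).symm⟩
  mul_mem' := by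
    rintro _ _ (⟨s, rfl⟩ | ⟨a, rfl⟩) (⟨t, rfl⟩ | ⟨b, rfl⟩)
    · exact Or.inl ⟨s * t, (map_mul _ _ _).symm⟩
    · exact Or.inr ⟨_, diagHom_mul_antiDiag _ _⟩
    · exact Or.inr ⟨_, antiDiag_mul_diagHom _ _⟩
    · exact Or.inl ⟨_, antiDiag_mul_antiDiag _ _⟩
  inv_mem' := by
    rintro _ (⟨s, rfl⟩ | ⟨a, rfl⟩)
    · exact Or.inl ⟨s⁻¹, (map_inv _ _).symm⟩
    · refine Or.inr ⟨-a, inv_eq_of_mul_eq_one_right ?_⟩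
      rw [antiDiag_mul_antiDiag]
      simp

lemma antiDiag_inv (a : ℂˣ) : (antiDiag a)⁻¹ = antiDiag (-a) := by
  apply inv_eq_of_mul_eq_one_right
  rw [antiDiag_mul_antiDiag]
  simp

/-- Commutators of monomial matrices are diagonal, the diagonal matrices having index two. -/
lemma commutator_monomial {x y : SL2} (hx : x ∈ monomialSubgroup) (hy : y ∈ monomialSubgroup) :
    x * y * x⁻¹ * y⁻¹ ∈ diagHom.range := by
  obtain (⟨s, rfl⟩ | ⟨a, rfl⟩) := hx <;> obtain (⟨t, rfl⟩ | ⟨b, rfl⟩) := hy <;>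
    simp only [antiDiag_inv, ← map_inv, ← map_mul, diagHom_mul_antiDiag,
      antiDiag_mul_diagHom, antiDiag_mul_antiDiag, MonoidHom.mem_range, exists_apply_eq_apply]

/-! ### The 2-bridge relation on elements with central squares -/

/-- If `A` and `B` have central squares, then an alternating product of their powers with
exponents `±1` is independent of these exponents up to a central factor. -/
lemma alternating_prod {G : Type*} [Group G] {A B : G} (hA : A * A ∈ Subgroup.center G)
    (hB : B * B ∈ Subgroup.center G) (f : ℕ → ℤ) (hf : ∀ k, f k = 1 ∨ f k = -1) (n : ℕ) :
    ∃ c ∈ Subgroup.center G,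
      ((List.range (2 * n)).map fun k => (if k % 2 = 0 then A else B) ^ f k).prod
        = c * (A * B) ^ n := by
  have key : ∀ X : G, X * X ∈ Subgroup.center G → ∀ k,
      ∃ c ∈ Subgroup.center G, X ^ f k = c * X := by
    intro X hX k
    rcases hf k with h | h
    · exact ⟨1, Subgroup.one_mem _, by simp [h]⟩
    · exact ⟨(X * X)⁻¹, Subgroup.inv_mem _ hX, by simp [h]⟩
  induction n with
  | zero => exact ⟨1, Subgroup.one_mem _, by simp⟩
  | succ n ih =>
    obtain ⟨c, hc, h⟩ := ih
    obtain ⟨d, hd, h1⟩ := key A hA (2 * n)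
    obtain ⟨e, he, h2⟩ := key B hB (2 * n + 1)
    refine ⟨c * d * e, Subgroup.mul_mem _ (Subgroup.mul_mem _ hc hd) he, ?_⟩
    have e1 : 2 * (n + 1) = 2 * n + 1 + 1 := by ring
    have e2 : (2 * n + 1) % 2 = 1 := by omega
    rw [e1, List.range_succ, List.range_succ]
    simp only [List.map_append, List.prod_append, List.map_cons, List.map_nil, List.prod_cons,
      List.prod_nil, mul_one, h, Nat.mul_mod_right, if_true, e2, one_ne_zero, if_false, h1, h2]
    rw [Subgroup.mem_center_iff] at hd he
    rw [pow_succ]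
    calc c * (A * B) ^ n * (d * A) * (e * B)
        = c * ((A * B) ^ n * d) * (A * e) * B := by group
      _ = c * (d * ((A * B) ^ n)) * (e * A) * B := by rw [hd, he]
      _ = c * d * ((A * B) ^ n * e) * A * B := by group
      _ = c * d * (e * (A * B) ^ n) * A * B := by rw [he]
      _ = _ := by group

/-- On antidiagonal matrices the signs in the relator only contribute a central factor to `w`, which
conjugation by `w` does not see; what remains is `(A B) ^ n * A = B * (A B) ^ n`. -/
lemma map_twoBridgeRel_eq_one_iff {p q : ℤ} {n : ℕ} (hn : p = 2 * n + 1) (a b : ℂˣ)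
    (φ : FreeGroup (Fin 2) →* SL2) (h0 : φ (FreeGroup.of 0) = antiDiag a)
    (h1 : φ (FreeGroup.of 1) = antiDiag b) :
    φ (twoBridgeRel p q) = 1 ↔ (b * a⁻¹) ^ (2 * n + 1) = 1 := by
  obtain ⟨c, hc, h⟩ := alternating_prod (antiDiag_sq_mem_center a) (antiDiag_sq_mem_center b)
    (fun k => twoBridgeSign p q ((k : ℤ) + 1))
    (fun k => by unfold twoBridgeSign; split_ifs <;> simp) n
  have hpn : p.toNat - 1 = 2 * n := by omega
  have hw : φ (twoBridgeWord p q) = c * (antiDiag a * antiDiag b) ^ n := by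
    rw [← h, twoBridgeWord, map_list_prod, List.map_map, hpn]
    congr 1
    -- In `twoBridgeWord` the index `k` elaborates as an integer, through a monadic coercion of
    -- `List.range` to `List ℤ`.
    have hcast : (do let a ← List.range (2 * n); pure ((a : ℕ) : ℤ) : List ℤ)
        = (List.range (2 * n)).map (fun a : ℕ => (a : ℤ)) := by
      simp [List.map_eq_flatMap]
    rw [hcast, List.map_map]
    apply List.map_congr_left
    intro k _
    have hk : ((k : ℤ) % 2 = 0) ↔ k % 2 = 0 := by omega
    simp only [Function.comp, map_zpow, hk]
    split_ifs <;> simp [h0, h1]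
  rw [Subgroup.mem_center_iff] at hc
  rw [twoBridgeRel, map_mul, map_mul, map_mul, map_inv, map_inv, h0, h1, hw, mul_inv_eq_one,
    mul_inv_eq_iff_eq_mul, ← mul_assoc, hc, mul_assoc, mul_assoc, mul_left_cancel_iff,
    antiDiag_mul_antiDiag, ← map_pow, diagHom_mul_antiDiag, antiDiag_mul_diagHom,
    antiDiag_injective.eq_iff]
  -- The relation now reads `(-(a / b)) ^ n * a = b * (-(a / b)) ^ (-n)`, where the signs cancel.
  have hs : ((-1 : ℂˣ) ^ n) * (-1) ^ n = 1 := by rw [← mul_pow]; simp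
  have e : (-(a * b⁻¹)) ^ n = (-1) ^ n * ((b * a⁻¹) ^ n)⁻¹ := by
    rw [← inv_pow, ← mul_pow]; congr 1; simp
  have hs' : ((-1 : ℂˣ) ^ n)⁻¹ = (-1) ^ n := inv_eq_of_mul_eq_one_right hs
  rw [e]
  set r := b * a⁻¹ with hr
  have hb : b = r * a := by simp [hr]
  rw [hb, mul_inv, inv_inv, hs', pow_succ, two_mul, pow_add]
  constructor
  · intro h
    have h' : (r ^ n)⁻¹ = r * r ^ n := by
      apply mul_left_cancel (a := (-1 : ℂˣ) ^ n * a)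
      calc _ = (-1) ^ n * (r ^ n)⁻¹ * a := by ac_rfl
        _ = _ := h
        _ = _ := by ac_rfl
    rw [inv_eq_iff_mul_eq_one] at h'
    rw [← h']; ac_rfl
  · intro h
    have h' : (r ^ n)⁻¹ = r * r ^ n := by
      rw [inv_eq_iff_mul_eq_one, ← h]; ac_rfl
    rw [h']; ac_rfl

/-! ### Normal form of an irreducible metabelian pair -/

/-- `A` and `B` have no common eigenvector. -/
def PairIrreducible (A B : SL2) : Prop :=
  ¬ ∃ v : Fin 2 → ℂ, v ≠ 0 ∧ (∃ c : ℂ, (A : M2).mulVec v = c • v) ∧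
    ∃ c : ℂ, (B : M2).mulVec v = c • v

lemma PairIrreducible.conj {A B : SL2} (h : PairIrreducible A B) (Q : SL2) :
    PairIrreducible (Q * A * Q⁻¹) (Q * B * Q⁻¹) := by
  rintro ⟨v, hv, ⟨c, hc⟩, d, hd⟩
  have tr : ∀ (X : SL2) (c : ℂ), ((Q * X * Q⁻¹ : SL2) : M2).mulVec v = c • v →
      (X : M2).mulVec (((Q⁻¹ : SL2) : M2).mulVec v) = c • ((Q⁻¹ : SL2) : M2).mulVec v := by
    intro X c hc
    rw [← Matrix.mulVec_smul, ← hc, Matrix.mulVec_mulVec, Matrix.mulVec_mulVec,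
      ← Matrix.SpecialLinearGroup.coe_mul, ← Matrix.SpecialLinearGroup.coe_mul]
    simp [mul_assoc]
  refine h ⟨((Q⁻¹ : SL2) : M2).mulVec v, ?_, ⟨c, tr A c hc⟩, d, tr B d hd⟩
  intro h0
  apply hv
  have := congrArg ((Q : M2).mulVec) h0
  rwa [Matrix.mulVec_mulVec, ← Matrix.SpecialLinearGroup.coe_mul, mul_inv_cancel,
    Matrix.SpecialLinearGroup.coe_one, Matrix.one_mulVec, Matrix.mulVec_zero] at this

lemma exists_eigenvector_s16 (T : SL2) :
    ∃ v : Fin 2 → ℂ, v ≠ 0 ∧ ∃ c : ℂ, (T : M2).mulVec v = c • v := by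
  obtain ⟨c, hc⟩ := Module.End.exists_eigenvalue (Matrix.toLin' (T : M2))
  obtain ⟨v, hv⟩ := hc.exists_hasEigenvector
  exact ⟨v, hv.2, c, by simpa using hv.apply_eq_smul⟩

lemma PairIrreducible.ne {A B : SL2} (h : PairIrreducible A B) : A ≠ B := by
  rintro rfl
  obtain ⟨v, hv, hc⟩ := exists_eigenvector_s16 A
  exact h ⟨v, hv, hc, hc⟩

lemma PairIrreducible.not_triangular {A B : SL2} (h : PairIrreducible A B)
    (hA : (A : M2) 1 0 = 0) (hB : (B : M2) 1 0 = 0) : False := by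
  refine h ⟨![1, 0], by simp, ⟨(A : M2) 0 0, ?_⟩, (B : M2) 0 0, ?_⟩ <;>
    ext i <;> fin_cases i <;> simp [Matrix.mulVec, dotProduct, Fin.sum_univ_two, hA, hB]

/-- Every element of `SL(2,ℂ)` is conjugate to an upper triangular one. -/
lemma exists_conj_triangular (T : SL2) : ∃ Q : SL2, ((Q * T * Q⁻¹ : SL2) : M2) 1 0 = 0 := by
  obtain ⟨v, hv, c, hc⟩ := exists_eigenvector_s16 T
  obtain ⟨P, hP0, hP1⟩ : ∃ P : SL2, (P : M2) 0 0 = v 0 ∧ (P : M2) 1 0 = v 1 := by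
    by_cases h0 : v 0 = 0
    · have h1 : v 1 ≠ 0 := fun h1 => hv (by ext i; fin_cases i <;> simp [h0, h1])
      exact ⟨⟨!![0, -(v 1)⁻¹; v 1, 0], by simp [h1]⟩, by simp [h0]⟩
    · exact ⟨⟨!![v 0, 0; v 1, (v 0)⁻¹], by simp [h0]⟩, by simp⟩
  refine ⟨P⁻¹, ?_⟩
  have e0 := congrFun hc 0
  have e1 := congrFun hc 1
  simp only [Matrix.mulVec, dotProduct, Fin.sum_univ_two, Pi.smul_apply, smul_eq_mul] at e0 e1
  rw [inv_inv]
  simp only [coe_mul_apply_two, Matrix.SpecialLinearGroup.coe_inv, Matrix.adjugate_fin_two, hP0, hP1,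
    Matrix.of_apply, Matrix.cons_val', Matrix.cons_val_zero, Matrix.cons_val_one]
  linear_combination v 0 * e1 - v 1 * e0

lemma trace_conj (A T : SL2) : ((A * T * A⁻¹ : SL2) : M2).trace = (T : M2).trace := by
  rw [Matrix.SpecialLinearGroup.coe_mul, Matrix.trace_mul_comm, ← Matrix.SpecialLinearGroup.coe_mul,
    ← mul_assoc, inv_mul_cancel, one_mul]

lemma det_two (T : SL2) :
    (T : M2) 0 0 * (T : M2) 1 1 - (T : M2) 0 1 * (T : M2) 1 0 = 1 := by
  rw [← Matrix.det_fin_two, Matrix.SpecialLinearGroup.det_coe]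

/-- The normal form when `T` is already diagonal with distinct eigenvalues: conjugation by `A`
permutes the two eigenlines of `T`, and it must swap them by irreducibility. -/
lemma exists_conj_antiDiag_of_diag {A T : SL2} (hirr : PairIrreducible A (T * A))
    (hcomm : A * T * A⁻¹ * T = T * (A * T * A⁻¹)) (h10 : (T : M2) 1 0 = 0)
    (h01 : (T : M2) 0 1 = 0) (hne : (T : M2) 0 0 ≠ (T : M2) 1 1) :
    ∃ (Q : SL2) (b : ℂˣ), Q * A * Q⁻¹ = antiDiag 1 ∧ Q * (T * A) * Q⁻¹ = antiDiag b := by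
  have htr := trace_conj A T
  have hSA : A * T * A⁻¹ * A = A * T := by group
  set S := A * T * A⁻¹
  have c01 := congrArg (fun M : SL2 => (M : M2) 0 1) hcomm
  have c10 := congrArg (fun M : SL2 => (M : M2) 1 0) hcomm
  have a00 := congrArg (fun M : SL2 => (M : M2) 0 0) hSA
  have a10 := congrArg (fun M : SL2 => (M : M2) 1 0) hSA
  have a11 := congrArg (fun M : SL2 => (M : M2) 1 1) hSA
  simp only [coe_mul_apply_two, h10, h01] at c01 c10 a00 a10 a11
  rw [Matrix.trace_fin_two, Matrix.trace_fin_two] at htr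
  have dS := det_two S
  have dT := det_two T
  have dA := det_two A
  have hne' := sub_ne_zero.2 hne
  have S01 : (S : M2) 0 1 = 0 := by
    apply (mul_eq_zero.1 (_ : (S : M2) 0 1 * ((T : M2) 0 0 - (T : M2) 1 1) = 0)).resolve_right hne'
    linear_combination -c01
  have S10 : (S : M2) 1 0 = 0 := by
    apply (mul_eq_zero.1 (_ : (S : M2) 1 0 * ((T : M2) 0 0 - (T : M2) 1 1) = 0)).resolve_right hne'
    linear_combination c10
  rw [S01, S10] at dS
  rw [S01] at a00
  rw [S10] at a10 a11
  rw [h01, h10] at dT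
  have hS : ((S : M2) 0 0 - (T : M2) 0 0) * ((S : M2) 0 0 - (T : M2) 1 1) = 0 := by
    linear_combination dT - dS + (S : M2) 0 0 * htr
  rcases mul_eq_zero.1 hS with h | h
  · -- `A` commutes with `T`, hence is diagonal, contradicting irreducibility.
    exfalso
    have A10 : (A : M2) 1 0 = 0 := by
      apply (mul_eq_zero.1 (_ : (A : M2) 1 0 * ((T : M2) 0 0 - (T : M2) 1 1) = 0)).resolve_right
        hne'
      linear_combination -a10 + (A : M2) 1 0 * htr - (A : M2) 1 0 * h
    exact hirr.not_triangular A10 (by rw [coe_mul_apply_two, A10, h10]; ring)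
  · have A00 : (A : M2) 0 0 = 0 := by
      apply (mul_eq_zero.1 (_ : (A : M2) 0 0 * ((T : M2) 0 0 - (T : M2) 1 1) = 0)).resolve_right
        hne'
      linear_combination -a00 + (A : M2) 0 0 * h
    have A11 : (A : M2) 1 1 = 0 := by
      apply (mul_eq_zero.1 (_ : (A : M2) 1 1 * ((T : M2) 0 0 - (T : M2) 1 1) = 0)).resolve_right
        hne'
      linear_combination a11 - (A : M2) 1 1 * htr + (A : M2) 1 1 * h
    rw [A00, A11] at dA
    have ha : (A : M2) 0 1 ≠ 0 := by rintro h; simp [h] at dA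
    have ht : (T : M2) 0 0 ≠ 0 := by rintro h; simp [h] at dT
    obtain ⟨a, ha'⟩ : ∃ a : ℂˣ, (a : ℂ) = (A : M2) 0 1 := ⟨Units.mk0 _ ha, rfl⟩
    obtain ⟨t, ht'⟩ : ∃ t : ℂˣ, (t : ℂ) = (T : M2) 0 0 := ⟨Units.mk0 _ ht, rfl⟩
    have hA : A = antiDiag a := by
      have : (A : M2) 1 0 = -((A : M2) 0 1)⁻¹ := by
        field_simp; linear_combination -dA
      ext i j
      fin_cases i <;> fin_cases j <;> simp [coe_antiDiag, A00, A11, ha', this]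
    have hT : T = diagHom t := by
      have : (T : M2) 1 1 = ((T : M2) 0 0)⁻¹ := by
        field_simp; linear_combination dT
      ext i j
      fin_cases i <;> fin_cases j <;> simp [coe_diagHom, h01, h10, ht', this]
    -- Conjugation by `diagHom u` multiplies the parameter of an antidiagonal matrix by `u ^ 2`.
    obtain ⟨u, hu⟩ : ∃ u : ℂˣ, u * u = a⁻¹ := by
      obtain ⟨z, hz⟩ := IsAlgClosed.exists_eq_mul_self ((a⁻¹ : ℂˣ) : ℂ)
      have hz0 : z ≠ 0 := by rintro rfl; simp at hz
      exact ⟨Units.mk0 z hz0, Units.ext (by simpa using hz.symm)⟩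
    refine ⟨diagHom u, t, ?_, ?_⟩
    · rw [hA, ← map_inv, diagHom_mul_antiDiag, antiDiag_mul_diagHom, inv_inv,
        mul_right_comm, hu, inv_mul_cancel]
    · rw [hA, hT, ← map_inv, diagHom_mul_antiDiag, diagHom_mul_antiDiag, antiDiag_mul_diagHom,
        inv_inv]
      congr 1
      calc u * (t * a) * u = u * u * a * t := by ac_rfl
        _ = t := by rw [hu]; simp

/-- The hypotheses of `exists_conj_antiDiag` are invariant under simultaneous conjugation. -/
lemma conj_hyp {A T : SL2} (Q : SL2) (hirr : PairIrreducible A (T * A))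
    (hcomm : A * T * A⁻¹ * T = T * (A * T * A⁻¹)) :
    PairIrreducible (Q * A * Q⁻¹) (Q * T * Q⁻¹ * (Q * A * Q⁻¹)) ∧
    (Q * A * Q⁻¹) * (Q * T * Q⁻¹) * (Q * A * Q⁻¹)⁻¹ * (Q * T * Q⁻¹)
      = (Q * T * Q⁻¹) * ((Q * A * Q⁻¹) * (Q * T * Q⁻¹) * (Q * A * Q⁻¹)⁻¹) := by
  constructor
  · have := hirr.conj Q
    convert this using 1
    group
  · calc _ = Q * (A * T * A⁻¹ * T) * Q⁻¹ := by group
      _ = Q * (T * (A * T * A⁻¹)) * Q⁻¹ := by rw [hcomm]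
      _ = _ := by group

/-- The conclusion of `exists_conj_antiDiag` is invariant under simultaneous conjugation. -/
lemma conj_concl {A T : SL2} (R : SL2)
    (h : ∃ (Q : SL2) (b : ℂˣ), Q * (R * A * R⁻¹) * Q⁻¹ = antiDiag 1 ∧
      Q * (R * T * R⁻¹ * (R * A * R⁻¹)) * Q⁻¹ = antiDiag b) :
    ∃ (Q : SL2) (b : ℂˣ), Q * A * Q⁻¹ = antiDiag 1 ∧ Q * (T * A) * Q⁻¹ = antiDiag b := by
  obtain ⟨Q, b, h1, h2⟩ := h
  exact ⟨Q * R, b, by rw [← h1]; group, by rw [← h2]; group⟩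

/-- The normal form when `T` is upper triangular: irreducibility excludes scalar and parabolic `T`,
and otherwise `T` can be diagonalised by a shear. -/
lemma exists_conj_antiDiag_of_triangular {A T : SL2} (hirr : PairIrreducible A (T * A))
    (hcomm : A * T * A⁻¹ * T = T * (A * T * A⁻¹)) (h10 : (T : M2) 1 0 = 0) :
    ∃ (Q : SL2) (b : ℂˣ), Q * A * Q⁻¹ = antiDiag 1 ∧ Q * (T * A) * Q⁻¹ = antiDiag b := by
  by_cases hne : (T : M2) 0 0 = (T : M2) 1 1
  · exfalso
    by_cases h01 : (T : M2) 0 1 = 0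
    · -- `T` is scalar, so every eigenvector of `A` is one of `T * A`.
      have hT : (T : M2) = (T : M2) 0 0 • (1 : M2) := by
        ext i j
        fin_cases i <;> fin_cases j <;> simp [h01, h10, hne]
      obtain ⟨v, hv, c, hc⟩ := exists_eigenvector_s16 A
      refine hirr ⟨v, hv, ⟨c, hc⟩, (T : M2) 0 0 * c, ?_⟩
      rw [Matrix.SpecialLinearGroup.coe_mul, ← Matrix.mulVec_mulVec, hc, hT]
      simp [Matrix.smul_mulVec, smul_smul]
    · -- `T` has a single eigenline, which `A` must preserve.
      have htr := trace_conj A T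
      have hSA : A * T * A⁻¹ * A = A * T := by group
      set S := A * T * A⁻¹
      have c00 := congrArg (fun M : SL2 => (M : M2) 0 0) hcomm
      have c01 := congrArg (fun M : SL2 => (M : M2) 0 1) hcomm
      have a11 := congrArg (fun M : SL2 => (M : M2) 1 1) hSA
      simp only [coe_mul_apply_two, h10] at c00 c01 a11
      rw [Matrix.trace_fin_two, Matrix.trace_fin_two] at htr
      have S10 : (S : M2) 1 0 = 0 := by
        apply (mul_eq_zero.1 (_ : (S : M2) 1 0 * (T : M2) 0 1 = 0)).resolve_right h01
        linear_combination -c00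
      have S00 : (S : M2) 0 0 - (S : M2) 1 1 = 0 := by
        apply (mul_eq_zero.1
          (_ : ((S : M2) 0 0 - (S : M2) 1 1) * (T : M2) 0 1 = 0)).resolve_right h01
        linear_combination c01 + (S : M2) 0 1 * hne
      have A10 : (A : M2) 1 0 = 0 := by
        apply (mul_eq_zero.1 (_ : (A : M2) 1 0 * (T : M2) 0 1 = 0)).resolve_right h01
        rw [S10] at a11
        linear_combination -a11 + (A : M2) 1 1 / 2 * (htr - S00 + hne)
      exact hirr.not_triangular A10 (by rw [coe_mul_apply_two, A10, h10]; ring)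
  · have hne' := sub_ne_zero.2 hne
    -- A shear removes the upper right entry of `T`.
    set x : ℂ := (T : M2) 0 1 / ((T : M2) 0 0 - (T : M2) 1 1) with hx
    have hx' : x * ((T : M2) 0 0 - (T : M2) 1 1) = (T : M2) 0 1 := by
      rw [hx]; field_simp
    obtain ⟨R, hR⟩ : ∃ R : SL2, (R : M2) = !![1, x; 0, 1] := ⟨⟨!![1, x; 0, 1], by simp⟩, rfl⟩
    have hR' : ((R⁻¹ : SL2) : M2) = !![1, -x; 0, 1] := by
      rw [Matrix.SpecialLinearGroup.coe_inv, hR]; simp [Matrix.adjugate_fin_two]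
    obtain ⟨k1, k2⟩ := conj_hyp R hirr hcomm
    apply conj_concl R
    apply exists_conj_antiDiag_of_diag k1 k2
    · simp [coe_mul_apply_two, hR, hR', h10]
    · simp only [coe_mul_apply_two, hR, hR', h10]
      simp
      linear_combination -hx'
    · simp [coe_mul_apply_two, hR, hR', h10, hne]

/-- An irreducible pair `A`, `B = T * A` for which `T` commutes with `A T A⁻¹` consists, up to
simultaneous conjugation, of antidiagonal matrices. -/
lemma exists_conj_antiDiag {A T : SL2} (hirr : PairIrreducible A (T * A))
    (hcomm : A * T * A⁻¹ * T = T * (A * T * A⁻¹)) :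
    ∃ (Q : SL2) (b : ℂˣ), Q * A * Q⁻¹ = antiDiag 1 ∧ Q * (T * A) * Q⁻¹ = antiDiag b := by
  obtain ⟨R, hR⟩ := exists_conj_triangular T
  obtain ⟨k1, k2⟩ := conj_hyp R hirr hcomm
  exact conj_concl R (exists_conj_antiDiag_of_triangular k1 k2 hR)

/-! ### Representations of the 2-bridge group -/

lemma isIrreducibleRep_iff {p q : ℤ} (ρ : TwoBridgeGroup p q →* SL2) :
    IsIrreducibleRep ρ ↔
      PairIrreducible (ρ (PresentedGroup.of 0)) (ρ (PresentedGroup.of 1)) := by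
  constructor
  · rintro h ⟨v, hv, h0, h1⟩
    refine h ⟨v, hv, ?_⟩
    let H : Subgroup (TwoBridgeGroup p q) :=
      { carrier := {g | ∃ c : ℂ, (ρ g : M2).mulVec v = c • v}
        one_mem' := ⟨1, by simp⟩
        mul_mem' := by
          rintro g g' ⟨c, hc⟩ ⟨c', hc'⟩
          refine ⟨c' * c, ?_⟩
          rw [map_mul, Matrix.SpecialLinearGroup.coe_mul, ← Matrix.mulVec_mulVec, hc',
            Matrix.mulVec_smul, hc, smul_smul]
        inv_mem' := by
          rintro g ⟨c, hc⟩
          have key : ((ρ g⁻¹ : SL2) : M2).mulVec (c • v) = v := by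
            rw [← hc, Matrix.mulVec_mulVec, ← Matrix.SpecialLinearGroup.coe_mul, ← map_mul,
              inv_mul_cancel, map_one, Matrix.SpecialLinearGroup.coe_one, Matrix.one_mulVec]
          have hc0 : c ≠ 0 := by
            rintro rfl
            rw [zero_smul, Matrix.mulVec_zero] at key
            exact hv key.symm
          refine ⟨c⁻¹, ?_⟩
          rw [Matrix.mulVec_smul] at key
          exact (eq_inv_smul_iff₀ hc0).2 key }
    intro g
    have hg : g ∈ H := PresentedGroup.generated_by _ H (fun j => by fin_cases j <;> assumption) g
    exact hg
  · rintro h ⟨v, hv, hg⟩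
    exact h ⟨v, hv, hg _, hg _⟩

lemma of_one_mul_inv_mem_commutator (p q : ℤ) :
    (PresentedGroup.of 1 * (PresentedGroup.of 0)⁻¹ : TwoBridgeGroup p q)
      ∈ commutator (TwoBridgeGroup p q) := by
  have h : (PresentedGroup.mk {twoBridgeRel p q} (twoBridgeRel p q) : TwoBridgeGroup p q) = 1 :=
    PresentedGroup.one_of_mem (Set.mem_singleton _)
  set w : TwoBridgeGroup p q := PresentedGroup.mk {twoBridgeRel p q} (twoBridgeWord p q)
  have h' : w * PresentedGroup.of 0 * w⁻¹ * (PresentedGroup.of 1)⁻¹ = 1 := by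
    rw [← h]; rfl
  rw [mul_inv_eq_one] at h'
  rw [← h', commutator_def]
  exact Subgroup.commutator_mem_commutator (Subgroup.mem_top w) (Subgroup.mem_top _)

/-- The assignment `x₁ ↦ antiDiag 1`, `x₂ ↦ antiDiag r` respects the relator exactly when
`r ^ p = 1`. -/
lemma lift_rel {p q : ℤ} {n : ℕ} (hn : p = 2 * n + 1) (r : ℂˣ) :
    (∀ g ∈ ({twoBridgeRel p q} : Set (FreeGroup (Fin 2))),
      FreeGroup.lift ![antiDiag 1, antiDiag r] g = 1) ↔ r ^ (2 * n + 1) = 1 := by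
  simp only [Set.mem_singleton_iff, forall_eq]
  rw [map_twoBridgeRel_eq_one_iff hn 1 r _ (by simp) (by simp)]
  simp

/-- The antidiagonal representation sending `x₁` to `antiDiag 1` and `x₂` to `antiDiag r`, for a
`p`-th root of unity `r`, where `p = 2 * n + 1`. -/
def antiRep {p q : ℤ} {n : ℕ} (hn : p = 2 * n + 1) (r : ℂˣ) (hr : r ^ (2 * n + 1) = 1) :
    TwoBridgeGroup p q →* SL2 :=
  PresentedGroup.toGroup ((lift_rel hn r).2 hr)

section antiRep

variable {p q : ℤ} {n : ℕ} (hn : p = 2 * n + 1) (r : ℂˣ) (hr : r ^ (2 * n + 1) = 1)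

lemma antiRep_zero : antiRep (q := q) hn r hr (PresentedGroup.of 0) = antiDiag 1 := by
  simp [antiRep]

lemma antiRep_one : antiRep (q := q) hn r hr (PresentedGroup.of 1) = antiDiag r := by
  simp [antiRep]

lemma antiRep_irreducible (hr2 : r ≠ 1) : IsIrreducibleRep (antiRep (q := q) hn r hr) := by
  rw [isIrreducibleRep_iff, antiRep_zero, antiRep_one]
  rintro ⟨v, hv, ⟨c, hc⟩, d, hd⟩
  have c0 := congrFun hc 0
  have c1 := congrFun hc 1
  have d0 := congrFun hd 0
  have d1 := congrFun hd 1
  simp [Matrix.mulVec, dotProduct, Fin.sum_univ_two, coe_antiDiag] at c0 c1 d0 d1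
  have hr0 : (r : ℂ) ≠ 0 := r.ne_zero
  have hx : v 0 ≠ 0 := by
    intro hx
    apply hv
    ext i
    fin_cases i
    · exact hx
    · simpa [hx] using c0
  -- Eliminating `c`, `d` and `v 1` leaves `r ^ 2 = 1`, and `r` has odd order.
  have hcc : c * c = -1 := by
    apply mul_right_cancel₀ hx
    linear_combination -c1 - c * c0
  have hd' : d = r * c := by
    apply mul_right_cancel₀ hx
    linear_combination -d0 + (r : ℂ) * c0
  have hy : (r : ℂ) * (r : ℂ) = 1 := by
    apply mul_right_cancel₀ hx
    field_simp at d1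
    rw [hd', c0] at d1
    linear_combination d1 + (r : ℂ) * r * v 0 * hcc
  apply hr2
  have hrr : r ^ 2 = 1 := Units.ext (by simpa [sq] using hy)
  rwa [pow_succ, pow_mul, hrr, one_pow, one_mul] at hr

lemma antiRep_metabelian : IsMetabelianRep (antiRep (q := q) hn r hr) := by
  set ρ := antiRep (q := q) hn r hr
  have hmono : ∀ g, ρ g ∈ monomialSubgroup := by
    intro g
    apply PresentedGroup.generated_by _ (monomialSubgroup.comap ρ)
    intro j
    fin_cases j
    · exact Or.inr ⟨_, antiRep_zero hn r hr⟩
    · exact Or.inr ⟨_, antiRep_one hn r hr⟩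
  have hle : commutator (TwoBridgeGroup p q) ≤ diagHom.range.comap ρ := by
    rw [commutator_def, Subgroup.commutator_le]
    intro x _ y _
    rw [Subgroup.mem_comap, commutatorElement_def, map_mul, map_mul, map_mul, map_inv, map_inv]
    exact commutator_monomial (hmono x) (hmono y)
  intro a ha b hb
  obtain ⟨s, hs⟩ := hle ha
  obtain ⟨t, ht⟩ := hle hb
  rw [← hs, ← ht, ← map_mul, ← map_mul, mul_comm]

end antiRep

/-- Every irreducible metabelian representation is conjugate to an antidiagonal one. -/
lemma exists_antiRep {p q : ℤ} {n : ℕ} (hn : p = 2 * n + 1) (ρ : TwoBridgeGroup p q →* SL2)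
    (h1 : IsIrreducibleRep ρ) (h2 : IsMetabelianRep ρ) :
    ∃ (r : ℂˣ) (hr : r ^ (2 * n + 1) = 1), r ≠ 1 ∧
      ∃ Q : SL2, ∀ g, antiRep hn r hr g = Q * ρ g * Q⁻¹ := by
  rw [isIrreducibleRep_iff] at h1
  have hT := of_one_mul_inv_mem_commutator p q
  set x : TwoBridgeGroup p q := PresentedGroup.of 0
  set y : TwoBridgeGroup p q := PresentedGroup.of 1
  have hxT : x * (y * x⁻¹) * x⁻¹ ∈ commutator (TwoBridgeGroup p q) :=
    (inferInstance : (commutator (TwoBridgeGroup p q)).Normal).conj_mem _ hT x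
  have hcomm := h2 _ hxT _ hT
  have hTA : ρ y = ρ (y * x⁻¹) * ρ x := by rw [← map_mul]; congr 1; group
  rw [map_mul, map_mul, map_inv] at hcomm
  rw [hTA] at h1
  obtain ⟨Q, r, hQ0, hQ1⟩ := exists_conj_antiDiag h1 hcomm
  rw [← hTA] at hQ1 h1
  have hQ : ∀ g, ((MulAut.conj Q).toMonoidHom.comp ρ) g = Q * ρ g * Q⁻¹ := fun g => by simp
  have hr : r ^ (2 * n + 1) = 1 := by
    have := (map_twoBridgeRel_eq_one_iff (q := q) hn 1 r
      (((MulAut.conj Q).toMonoidHom.comp ρ).comp (PresentedGroup.mk {twoBridgeRel p q}))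
      (by rw [MonoidHom.comp_apply, hQ]; exact hQ0)
      (by rw [MonoidHom.comp_apply, hQ]; exact hQ1)).1 (by
        rw [MonoidHom.comp_apply, PresentedGroup.one_of_mem (Set.mem_singleton _), map_one])
    simpa using this
  refine ⟨r, hr, ?_, Q, ?_⟩
  · rintro rfl
    exact (h1.conj Q).ne (by rw [hQ0, hQ1])
  · have : antiRep hn r hr = (MulAut.conj Q).toMonoidHom.comp ρ := by
      apply PresentedGroup.ext
      intro j
      rw [hQ]
      fin_cases j
      · exact (antiRep_zero hn r hr).trans hQ0.symm
      · exact (antiRep_one hn r hr).trans hQ1.symm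
    intro g
    rw [this, hQ]

/-- Conjugation by `antiDiag 1` inverts the parameter. -/
lemma antiRep_inv_conj {p q : ℤ} {n : ℕ} (hn : p = 2 * n + 1) (r s : ℂˣ)
    (hr : r ^ (2 * n + 1) = 1) (hs : s ^ (2 * n + 1) = 1) (hrs : s = r⁻¹) :
    ∃ Q : SL2, ∀ g, antiRep (q := q) hn s hs g = Q * antiRep hn r hr g * Q⁻¹ := by
  refine ⟨antiDiag 1, fun g => ?_⟩
  have : antiRep (q := q) hn s hs
      = (MulAut.conj (antiDiag 1)).toMonoidHom.comp (antiRep hn r hr) := by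
    apply PresentedGroup.ext
    intro j
    simp only [MonoidHom.comp_apply, MulEquiv.coe_toMonoidHom, MulAut.conj_apply]
    fin_cases j
    · change antiRep hn s hs (PresentedGroup.of 0)
        = antiDiag 1 * antiRep hn r hr (PresentedGroup.of 0) * _
      rw [antiRep_zero, antiRep_zero, mul_inv_cancel_right]
    · change antiRep hn s hs (PresentedGroup.of 1)
        = antiDiag 1 * antiRep hn r hr (PresentedGroup.of 1) * _
      rw [antiRep_one, antiRep_one, antiDiag_inv, antiDiag_mul_antiDiag, diagHom_mul_antiDiag, hrs]
      simp
  rw [this]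
  simp

/-- The trace of `x₁ x₂` determines the parameter up to inversion. -/
lemma eq_or_eq_inv_of_conj {p q : ℤ} {n : ℕ} (hn : p = 2 * n + 1) (r s : ℂˣ)
    (hr : r ^ (2 * n + 1) = 1) (hs : s ^ (2 * n + 1) = 1)
    (h : ∃ Q : SL2, ∀ g, antiRep (q := q) hn s hs g = Q * antiRep hn r hr g * Q⁻¹) :
    r = s ∨ r * s = 1 := by
  obtain ⟨Q, hQ⟩ := h
  have h := hQ (PresentedGroup.of 0 * PresentedGroup.of 1)
  rw [map_mul, map_mul, antiRep_zero, antiRep_one, antiRep_zero, antiRep_one,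
    antiDiag_mul_antiDiag, antiDiag_mul_antiDiag] at h
  have htr : (diagHom (-(1 * s⁻¹)) : M2).trace = (diagHom (-(1 * r⁻¹)) : M2).trace := by
    rw [h, trace_conj]
  simp only [coe_diagHom, Matrix.trace_fin_two] at htr
  simp at htr
  have hr0 : (r : ℂ) ≠ 0 := r.ne_zero
  have hs0 : (s : ℂ) ≠ 0 := s.ne_zero
  field_simp at htr
  have : ((r : ℂ) - s) * (r * s - 1) = 0 := by linear_combination htr
  rcases mul_eq_zero.1 this with h | h
  · exact Or.inl (Units.ext (sub_eq_zero.1 h))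
  · exact Or.inr (Units.ext (by simpa using sub_eq_zero.1 h))

/-- For coprime odd integers `p > |q| > 0`, the 2-bridge knot group
`Γ_{p,q}` has, up to conjugation, exactly `(p − 1)/2` irreducible metabelian
representations into `SL(2,ℂ)`. -/
theorem card_irreducible_metabelian_reps_two_bridge
    (p q : ℤ) (hp : Odd p) (hq : Odd q) (hco : IsCoprime p q)
    (hpq : |q| < p) (hq0 : 0 < |q|) :
    Finite (Quotient (conjSetoid
      (fun ρ : TwoBridgeGroup p q →* Matrix.SpecialLinearGroup (Fin 2) ℂ =>
        IsIrreducibleRep ρ ∧ IsMetabelianRep ρ))) ∧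
    Nat.card (Quotient (conjSetoid
      (fun ρ : TwoBridgeGroup p q →* Matrix.SpecialLinearGroup (Fin 2) ℂ =>
        IsIrreducibleRep ρ ∧ IsMetabelianRep ρ))) = ((p - 1) / 2).toNat := by
  obtain ⟨m, hm⟩ := hp
  obtain ⟨n, rfl⟩ : ∃ n : ℕ, m = n := ⟨m.toNat, by omega⟩
  have hN0 : (2 * n + 1) ≠ 0 := by omega
  have hζ' := Complex.isPrimitiveRoot_exp (2 * n + 1) hN0
  obtain ⟨ζ, hζ⟩ : ∃ ζ : ℂˣ, IsPrimitiveRoot ζ (2 * n + 1) :=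
    ⟨(hζ'.isUnit hN0).unit, IsPrimitiveRoot.coe_units_iff.1 (by simpa using hζ')⟩
  have hpow : ∀ k : ℕ, (ζ ^ k) ^ (2 * n + 1) = 1 := fun k => by
    rw [← pow_mul, mul_comm, pow_mul, hζ.pow_eq_one, one_pow]
  have hne : ∀ k : Fin n, ζ ^ (k.1 + 1) ≠ 1 := fun k =>
    hζ.pow_ne_one_of_pos_of_lt (by omega) (by omega)
  -- The classes are represented by the parameters `ζ, ζ ^ 2, …, ζ ^ n`.
  let F : Fin n → Quotient (conjSetoid
      (fun ρ : TwoBridgeGroup p q →* SL2 => IsIrreducibleRep ρ ∧ IsMetabelianRep ρ)) :=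
    fun k => Quotient.mk _ ⟨antiRep hm (ζ ^ (k.1 + 1)) (hpow _),
      antiRep_irreducible hm _ _ (hne k), antiRep_metabelian hm _ _⟩
  have hF : Function.Bijective F := by
    constructor
    · intro j k hjk
      have hQ := Quotient.exact hjk
      rcases eq_or_eq_inv_of_conj hm _ _ (hpow _) (hpow _) hQ with h | h
      · have := hζ.pow_inj (by omega) (by omega) h
        ext; omega
      · exfalso
        rw [← pow_add] at h
        exact hζ.pow_ne_one_of_pos_of_lt (by omega) (by omega) h
    · intro x
      induction x using Quotient.inductionOn with
      | h ρ =>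
        obtain ⟨ρ, h1, h2⟩ := ρ
        obtain ⟨r, hr, hr1, Q, hQ⟩ := exists_antiRep hm ρ h1 h2
        obtain ⟨i, hi, hir⟩ := (IsPrimitiveRoot.coe_units_iff.2 hζ).eq_pow_of_pow_eq_one
          (ξ := (r : ℂ)) (by rw [← Units.val_pow_eq_pow_val, hr, Units.val_one])
        obtain rfl : ζ ^ i = r := Units.ext (by simpa using hir)
        have hi0 : i ≠ 0 := by rintro rfl; simp at hr1
        by_cases hin : i ≤ n
        · refine ⟨⟨i - 1, by omega⟩, (Quotient.sound ?_).symm⟩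
          refine ⟨Q, fun g => ?_⟩
          rw [← hQ]
          simp only [Nat.sub_add_cancel (Nat.one_le_iff_ne_zero.2 hi0)]
        · have he : 2 * n + 1 - i - 1 + 1 = 2 * n + 1 - i := by omega
          refine ⟨⟨2 * n + 1 - i - 1, by omega⟩, (Quotient.sound ?_).symm⟩
          obtain ⟨R, hR⟩ := antiRep_inv_conj (q := q) hm (ζ ^ i) (ζ ^ (2 * n + 1 - i - 1 + 1))
            (hpow _) (hpow _) (by
              rw [he, eq_inv_iff_mul_eq_one, ← pow_add, Nat.sub_add_cancel hi.le, hζ.pow_eq_one])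
          refine ⟨R * Q, fun g => ?_⟩
          refine (hR g).trans ?_
          rw [hQ]
          group
  refine ⟨Finite.of_surjective F hF.2, ?_⟩
  rw [← Nat.card_eq_of_bijective F hF, Nat.card_fin]
  omega
end

section
/- Let p and q be coprime odd integers with p > |q| > 0. Set e_i = (−1)^{⌊iq/p⌋} for i = 1, …, p − 1, let w = x₁^{e₁} x₂^{e₂} x₁^{e₃} x₂^{e₄} ⋯ x₁^{e_{p−2}} x₂^{e_{p−1}} in the free group on x₁, x₂, and let Γ_{p,q} = ⟨x₁, x₂ | w x₁ w⁻¹ x₂⁻¹⟩ be the corresponding presented group (the knot group of the 2-bridge knot S(p,q)). Then every irreducible representation ρ : Γ_{p,q} → SL(2,ℂ) with trace(ρ(x₁)) = 0 is metabelian, and the set of such representations up to conjugation by SL(2,ℂ) is finite with exactly (p − 1)/2 elements. (Hence the trace-zero section of the character variety of Γ_{p,q} consists of exactly (p − 1)/2 irreducible metabelian characters together with the single reducible abelian character.) -/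
/-- The group `SL(2,ℂ)`. -/
abbrev SL2 : Type := Matrix.SpecialLinearGroup (Fin 2) ℂ

/-! ### The relation for generators squaring to a central involution -/

/-- Inverting letters of an alternating word in `a`, `b` costs only powers of `z = a² = b²`. -/
lemma alternating_prod_s17 {G : Type*} [Group G] (z a b : G) (hz : ∀ g, z * g = g * z)
    (hzz : z * z = 1) (ha : a * a = z) (hb : b * b = z) (e : ℕ → ℤ)
    (he : ∀ k, e k = 1 ∨ e k = -1) (n : ℕ) :
    ∃ c : G, (∀ g, c * g = g * c) ∧
      ((List.range (2 * n)).map fun k => (if k % 2 = 0 then a else b) ^ e k).prod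
        = c * (a * b) ^ n := by
  have sq_inv : ∀ x : G, x * x = z → x⁻¹ = z * x := fun x hx => by
    rw [inv_eq_iff_mul_eq_one, ← mul_assoc, ← hz, mul_assoc, hx, hzz]
  have letter : ∀ (x : G) (k : ℕ), x * x = z → ∃ c : G, (∀ g, c * g = g * c) ∧
      x ^ e k = c * x := by
    intro x k hx
    rcases he k with h | h
    · exact ⟨1, by simp, by simp [h]⟩
    · exact ⟨z, hz, by rw [h, zpow_neg_one, sq_inv x hx]⟩
  induction n with
  | zero => exact ⟨1, by simp, by simp⟩
  | succ n ih =>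
    obtain ⟨c, hc, h⟩ := ih
    obtain ⟨c₁, hc₁, h₁⟩ := letter a (2 * n) ha
    obtain ⟨c₂, hc₂, h₂⟩ := letter b (2 * n + 1) hb
    refine ⟨c * c₁ * c₂, fun g => ?_, ?_⟩
    · rw [mul_assoc, hc₂, ← mul_assoc, mul_assoc c, hc₁, ← mul_assoc, hc]
      simp only [mul_assoc]
    · rw [show 2 * (n + 1) = 2 * n + 1 + 1 by ring, List.range_succ, List.range_succ]
      simp only [List.map_append, List.prod_append, h, List.map_cons, List.map_nil,
        List.prod_cons, List.prod_nil, mul_one]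
      rw [if_pos (by omega), if_neg (by omega), h₁, h₂, pow_succ]
      calc c * (a * b) ^ n * (c₁ * a) * (c₂ * b)
          = c * ((a * b) ^ n * c₁) * (a * c₂) * b := by simp only [mul_assoc]
        _ = c * c₁ * (((a * b) ^ n * c₂)) * a * b := by
            rw [← hc₁, ← hc₂]; simp only [mul_assoc]
        _ = _ := by rw [← hc₂]; simp only [mul_assoc]

/-- The relator `w x₁ w⁻¹ x₂⁻¹` dies exactly when `(ab)^p = z`. -/
lemma relator_iff {G : Type*} [Group G] (z : G) (hz : ∀ g, z * g = g * z)
    (hzz : z * z = 1) (f : FreeGroup (Fin 2) →* G)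
    (ha : f (FreeGroup.of 0) * f (FreeGroup.of 0) = z)
    (hb : f (FreeGroup.of 1) * f (FreeGroup.of 1) = z) (q : ℤ) (n : ℕ) :
    f (twoBridgeRel (2 * n + 1) q) = 1 ↔
      (f (FreeGroup.of 0) * f (FreeGroup.of 1)) ^ (2 * n + 1) = z := by
  have hw : f (twoBridgeWord (2 * n + 1) q) = ((List.range (2 * n)).map fun k : ℕ =>
      (if k % 2 = 0 then f (FreeGroup.of 0) else f (FreeGroup.of 1)) ^
        twoBridgeSign (2 * n + 1) q ((k : ℤ) + 1)).prod := by
    rw [twoBridgeWord, map_list_prod, List.map_map]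
    rw [show ((2 * (n : ℤ) + 1).toNat - 1) = 2 * n by omega]
    -- `twoBridgeWord` runs over the list `0, …, p - 2` cast to `ℤ`.
    simp only [bind_pure_comp, List.map_eq_map, List.map_map]
    congr 2
    funext k
    simp only [Function.comp, map_zpow]
    have hk : ((k : ℤ) % 2 = 0) ↔ k % 2 = 0 := by omega
    simp only [hk]
    split_ifs <;> rfl
  set a := f (FreeGroup.of 0) with ha'
  set b := f (FreeGroup.of 1) with hb'
  obtain ⟨c, hc, h⟩ := alternating_prod_s17 z a b hz hzz ha hb
    (fun k => twoBridgeSign (2 * n + 1) q ((k : ℤ) + 1))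
    (fun k => by unfold twoBridgeSign; split_ifs <;> simp) n
  rw [twoBridgeRel, map_mul, map_mul, map_mul, map_inv, map_inv, hw, h, ← ha', ← hb',
    mul_inv_eq_one]
  have hinv : (a * b)⁻¹ = b * a := by
    rw [inv_eq_iff_mul_eq_one, mul_assoc, ← mul_assoc b, hb, hz, ← mul_assoc, ha, hzz]
  have hs : SemiconjBy a (a * b)⁻¹ (a * b) := by
    rw [hinv]; simp [SemiconjBy, mul_assoc]
  have hsn : a * ((a * b) ^ n)⁻¹ = (a * b) ^ n * a := by
    rw [← inv_pow]; exact hs.pow_right n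
  have e1 : c * (a * b) ^ n * a * (c * (a * b) ^ n)⁻¹ = (a * b) ^ (2 * n) * a := by
    calc c * (a * b) ^ n * a * (c * (a * b) ^ n)⁻¹
        = c * ((a * b) ^ n * (a * ((a * b) ^ n)⁻¹)) * c⁻¹ := by
          simp only [mul_inv_rev, mul_assoc]
      _ = (a * b) ^ (2 * n) * a := by
          rw [hc, mul_inv_cancel_right, hsn, two_mul, pow_add, mul_assoc]
  rw [e1]
  constructor
  · intro h
    rw [pow_succ, ← mul_assoc, h, hb]
  · intro h
    rw [pow_succ, ← mul_assoc, ← hb] at h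
    exact mul_right_cancel h

/-! ### Trace-free elements of `SL(2,ℂ)` -/

lemma sq_eq_neg_one_of_trace (M : SL2) (h : Matrix.trace (M : Matrix (Fin 2) (Fin 2) ℂ) = 0) :
    M * M = -1 := by
  have hd := M.det_coe
  rw [Matrix.det_fin_two] at hd
  rw [Matrix.trace_fin_two] at h
  have h1 : M.1 1 1 = - M.1 0 0 := by linear_combination h
  rw [h1] at hd
  ext i j
  fin_cases i <;> fin_cases j <;>
    simp [Matrix.mul_apply, Fin.sum_univ_two, h1]
  · linear_combination -hd
  · ring
  · ring
  · linear_combination -hd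

/-- The image of the generator `x₁` in the normal form. -/
def normalA : SL2 := ⟨!![0, -1; 1, 0], by simp [Matrix.det_fin_two]⟩

/-- The image of the generator `x₂` in the normal form with parameter `μ`. -/
noncomputable def normalB (μ : ℂˣ) : SL2 :=
  ⟨!![0, ((μ⁻¹ : ℂˣ) : ℂ); -(μ : ℂ), 0], by simp [Matrix.det_fin_two]⟩

lemma normalA_sq : normalA * normalA = -1 :=
  sq_eq_neg_one_of_trace _ (by simp [normalA, Matrix.trace_fin_two])

lemma normalB_sq (μ : ℂˣ) : normalB μ * normalB μ = -1 :=
  sq_eq_neg_one_of_trace _ (by simp [normalB, Matrix.trace_fin_two])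

lemma coe_normalA_mul_normalB (μ : ℂˣ) :
    ((normalA * normalB μ : SL2) : Matrix (Fin 2) (Fin 2) ℂ) =
      Matrix.diagonal ![(μ : ℂ), ((μ⁻¹ : ℂˣ) : ℂ)] := by
  rw [Matrix.SpecialLinearGroup.coe_mul]
  ext i j
  fin_cases i <;> fin_cases j <;> simp [normalA, normalB, Matrix.mul_apply]

lemma normal_pow (μ : ℂˣ) (n : ℕ) (h : μ ^ (2 * n + 1) = -1) :
    (normalA * normalB μ) ^ (2 * n + 1) = -1 := by
  apply Subtype.ext
  have h' : (μ : ℂ) ^ (2 * n + 1) = -1 := by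
    simpa using congrArg Units.val h
  have h'' : ((μ : ℂ)⁻¹) ^ (2 * n + 1) = -1 := by rw [inv_pow, h']; norm_num
  rw [Matrix.SpecialLinearGroup.coe_pow, coe_normalA_mul_normalB, Matrix.diagonal_pow]
  ext i j
  fin_cases i <;> fin_cases j <;> simp [h', h'']

lemma neg_one_central (g : SL2) : -1 * g = g * -1 := by simp

/-- The normal form: `x₁ x₂` acts as `diag(μ, μ⁻¹)` and `x₁` exchanges the two coordinate lines. -/
noncomputable def normalRep (n : ℕ) (q : ℤ) (μ : ℂˣ) (h : μ ^ (2 * n + 1) = -1) :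
    TwoBridgeGroup (2 * n + 1) q →* SL2 :=
  PresentedGroup.toGroup (f := ![normalA, normalB μ]) (by
    rintro r rfl
    rw [relator_iff (-1) neg_one_central (by simp)]
    · simpa using normal_pow μ n h
    · simpa using normalA_sq
    · simpa using normalB_sq μ)

@[simp] lemma normalRep_zero (n : ℕ) (q : ℤ) (μ : ℂˣ) (h : μ ^ (2 * n + 1) = -1) :
    normalRep n q μ h (PresentedGroup.of 0) = normalA := by
  simp [normalRep]

@[simp] lemma normalRep_one (n : ℕ) (q : ℤ) (μ : ℂˣ) (h : μ ^ (2 * n + 1) = -1) :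
    normalRep n q μ h (PresentedGroup.of 1) = normalB μ := by
  simp [normalRep]

lemma normalRep_trace_zero (n : ℕ) (q : ℤ) (μ : ℂˣ) (h : μ ^ (2 * n + 1) = -1) :
    Matrix.trace (normalRep n q μ h (PresentedGroup.of 0) : Matrix (Fin 2) (Fin 2) ℂ) = 0 := by
  simp [normalA, Matrix.trace_fin_two]

lemma normalRep_trace_mul (n : ℕ) (q : ℤ) (μ : ℂˣ) (h : μ ^ (2 * n + 1) = -1) :
    Matrix.trace (normalRep n q μ h (PresentedGroup.of 0 * PresentedGroup.of 1) :
      Matrix (Fin 2) (Fin 2) ℂ) = μ + (μ : ℂ)⁻¹ := by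
  rw [map_mul, normalRep_zero, normalRep_one, coe_normalA_mul_normalB]
  simp

/-- A line preserved by both generators is invariant under the whole group. -/
lemma line_invariant (p q : ℤ) (ρ : TwoBridgeGroup p q →* SL2) (v : Fin 2 → ℂ) (hv : v ≠ 0)
    (hgen : ∀ i : Fin 2, ∃ c : ℂ, (ρ (PresentedGroup.of i)).1.mulVec v = c • v)
    (g : TwoBridgeGroup p q) : ∃ c : ℂ, (ρ g).1.mulVec v = c • v := by
  induction g using PresentedGroup.induction_on with
  | _ w =>
    induction w using FreeGroup.induction_on with
    | C1 => exact ⟨1, by simp⟩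
    | of i => exact hgen i
    | inv_of i _ =>
      obtain ⟨c, hc⟩ := hgen i
      rw [map_inv, map_inv]
      change ∃ d : ℂ, ((ρ (PresentedGroup.of i))⁻¹).1.mulVec v = d • v
      have h1 : c • ((ρ (PresentedGroup.of i))⁻¹).1.mulVec v = v := by
        rw [← Matrix.mulVec_smul, ← hc, Matrix.mulVec_mulVec,
          ← Matrix.SpecialLinearGroup.coe_mul, inv_mul_cancel]
        simp
      have hc0 : c ≠ 0 := by
        rintro rfl
        exact hv (by simpa using h1.symm)
      exact ⟨c⁻¹, by rw [eq_inv_smul_iff₀ hc0, h1]⟩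
    | mul x y hx hy =>
      obtain ⟨c, hc⟩ := hx
      obtain ⟨d, hd⟩ := hy
      refine ⟨d * c, ?_⟩
      rw [map_mul, map_mul, Matrix.SpecialLinearGroup.coe_mul, ← Matrix.mulVec_mulVec, hd,
        Matrix.mulVec_smul, hc, smul_smul]

/-! ### Irreducibility and metabelianness of the normal form -/

lemma normalRep_irreducible (n : ℕ) (q : ℤ) (μ : ℂˣ) (h : μ ^ (2 * n + 1) = -1)
    (hμ : μ ≠ -1) : IsIrreducibleRep (normalRep n q μ h) := by
  rintro ⟨v, hv, hinv⟩
  obtain ⟨c, hc⟩ := hinv (PresentedGroup.of 0)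
  obtain ⟨d, hd⟩ := hinv (PresentedGroup.of 0 * PresentedGroup.of 1)
  rw [map_mul, normalRep_zero, normalRep_one, coe_normalA_mul_normalB] at hd
  rw [normalRep_zero] at hc
  have c0 := congrFun hc 0
  have c1 := congrFun hc 1
  have d0 := congrFun hd 0
  have d1 := congrFun hd 1
  simp [normalA, Matrix.mulVec, dotProduct, Fin.sum_univ_two] at c0 c1
  simp [Matrix.mulVec_diagonal] at d0 d1
  have hv0 : v 0 ≠ 0 := fun h0 => hv (by
    ext i; fin_cases i
    · exact h0
    · simpa [h0] using c0)
  have hv1 : v 1 ≠ 0 := fun h1 => hv0 (by simpa [h1] using c1)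
  have e0 := d0.resolve_right hv0
  have e1 := d1.resolve_right hv1
  -- Both eigenvalues agree, so `μ² = 1`, and `μ^(2n+1) = -1` forces `μ = -1`.
  have hsq : μ * μ = 1 := by
    apply Units.ext
    have hne := μ.ne_zero
    rw [← e1] at e0
    push_cast
    field_simp at e0
    linear_combination e0
  apply hμ
  rw [pow_succ, pow_mul, pow_two, hsq, one_pow, one_mul] at h
  exact h

lemma normalRep_neg_one_reducible (n : ℕ) (q : ℤ) (h : (-1 : ℂˣ) ^ (2 * n + 1) = -1) :
    ¬ IsIrreducibleRep (normalRep n q (-1) h) := by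
  rw [IsIrreducibleRep, not_not]
  have key : normalB (-1) = normalA := by
    apply Subtype.ext; simp [normalA, normalB]
  -- An eigenvector of `normalA` for the eigenvalue `i`.
  have hv : ![Complex.I, 1] ≠ 0 := fun h0 => by simpa using congrFun h0 1
  refine ⟨![Complex.I, 1], hv, line_invariant _ _ _ _ hv fun i => ⟨Complex.I, ?_⟩⟩
  have : normalRep n q (-1) h (PresentedGroup.of i) = normalA := by
    fin_cases i
    · exact normalRep_zero n q _ h
    · exact (normalRep_one n q _ h).trans key
  rw [this]
  ext i
  fin_cases i <;> simp [normalA, Matrix.mulVec, dotProduct, Fin.sum_univ_two]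

/-- Diagonal or antidiagonal matrices. -/
def IsMonomial (M : SL2) : Prop :=
  (M.1 0 1 = 0 ∧ M.1 1 0 = 0) ∨ (M.1 0 0 = 0 ∧ M.1 1 1 = 0)

lemma IsMonomial.mul {M N : SL2} (hM : IsMonomial M) (hN : IsMonomial N) :
    IsMonomial (M * N) := by
  unfold IsMonomial at *
  rcases hM with ⟨h1, h2⟩ | ⟨h1, h2⟩ <;> rcases hN with ⟨h3, h4⟩ | ⟨h3, h4⟩ <;>
    simp [Matrix.mul_apply, Fin.sum_univ_two, h1, h2, h3, h4]

lemma IsMonomial.inv {M : SL2} (hM : IsMonomial M) : IsMonomial M⁻¹ := by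
  unfold IsMonomial at *
  rcases hM with ⟨h1, h2⟩ | ⟨h1, h2⟩ <;>
    simp [Matrix.SpecialLinearGroup.coe_inv, Matrix.adjugate_fin_two, h1, h2]

lemma normalRep_monomial (n : ℕ) (q : ℤ) (μ : ℂˣ) (h : μ ^ (2 * n + 1) = -1)
    (g : TwoBridgeGroup (2 * n + 1) q) : IsMonomial (normalRep n q μ h g) := by
  have gen : ∀ i : Fin 2, IsMonomial (normalRep n q μ h (PresentedGroup.of i)) := by
    intro i
    fin_cases i
    · simp [IsMonomial, normalA]
    · simp [IsMonomial, normalB]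
  induction g using PresentedGroup.induction_on with
  | _ w =>
    induction w using FreeGroup.induction_on with
    | C1 => simp [IsMonomial]
    | of i => exact gen i
    | inv_of i _ => rw [map_inv, map_inv]; exact (gen i).inv
    | mul x y hx hy => rw [map_mul, map_mul]; exact hx.mul hy

/-- The diagonal subgroup of `SL(2,ℂ)`. -/
def diagSubgroup : Subgroup SL2 where
  carrier := {M | M.1 0 1 = 0 ∧ M.1 1 0 = 0}
  one_mem' := by simp
  mul_mem' := by
    rintro M N ⟨h1, h2⟩ ⟨h3, h4⟩
    simp [Matrix.mul_apply, Fin.sum_univ_two, h1, h2, h3, h4]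
  inv_mem' := by
    rintro M ⟨h1, h2⟩
    simp [Matrix.SpecialLinearGroup.coe_inv, Matrix.adjugate_fin_two, h1, h2]

lemma normalRep_metabelian (n : ℕ) (q : ℤ) (μ : ℂˣ) (h : μ ^ (2 * n + 1) = -1) :
    IsMetabelianRep (normalRep n q μ h) := by
  have key : commutator (TwoBridgeGroup (2 * n + 1) q) ≤
      diagSubgroup.comap (normalRep n q μ h) := by
    rw [commutator_def, Subgroup.commutator_le]
    intro g₁ _ g₂ _
    have h1 := normalRep_monomial n q μ h g₁
    have h2 := normalRep_monomial n q μ h g₂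
    rw [Subgroup.mem_comap, map_commutatorElement, commutatorElement_def]
    change _ ∧ _
    unfold IsMonomial at h1 h2
    rcases h1 with ⟨h3, h4⟩ | ⟨h3, h4⟩ <;> rcases h2 with ⟨h5, h6⟩ | ⟨h5, h6⟩ <;>
      simp [Matrix.mul_apply, Fin.sum_univ_two, Matrix.SpecialLinearGroup.coe_inv,
        Matrix.adjugate_fin_two, h3, h4, h5, h6]
  intro a ha b hb
  obtain ⟨h1, h2⟩ := key ha
  obtain ⟨h3, h4⟩ := key hb
  ext i j
  fin_cases i <;> fin_cases j <;>
    simp [Matrix.mul_apply, Fin.sum_univ_two, h1, h2, h3, h4, mul_comm]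

/-! ### Reduction to the normal form -/

/-- A trace-free representation satisfies `A² = B² = -1` and `(AB)^(2n+1) = -1`. -/
lemma generator_relations (n : ℕ) (q : ℤ) (ρ : TwoBridgeGroup (2 * n + 1) q →* SL2)
    (htr : Matrix.trace (ρ (PresentedGroup.of 0) : Matrix (Fin 2) (Fin 2) ℂ) = 0) :
    ρ (PresentedGroup.of 0) * ρ (PresentedGroup.of 0) = -1 ∧
    ρ (PresentedGroup.of 1) * ρ (PresentedGroup.of 1) = -1 ∧
    (ρ (PresentedGroup.of 0) * ρ (PresentedGroup.of 1)) ^ (2 * n + 1) = -1 := by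
  have hA := sq_eq_neg_one_of_trace _ htr
  let f : FreeGroup (Fin 2) →* SL2 := ρ.comp (PresentedGroup.mk {twoBridgeRel (2 * n + 1) q})
  have hf : ∀ i, f (FreeGroup.of i) = ρ (PresentedGroup.of i) := fun i => rfl
  have hrel : f (twoBridgeRel (2 * n + 1) q) = 1 := by
    change ρ (PresentedGroup.mk _ _) = 1
    rw [PresentedGroup.one_of_mem (Set.mem_singleton _), map_one]
  have hB : ρ (PresentedGroup.of 1) * ρ (PresentedGroup.of 1) = -1 := by
    have h := hrel
    rw [twoBridgeRel, map_mul, map_mul, map_mul, map_inv, map_inv, mul_inv_eq_one, hf, hf] at h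
    rw [← h]
    set w := f (twoBridgeWord (2 * n + 1) q)
    set a := ρ (PresentedGroup.of 0)
    calc w * a * w⁻¹ * (w * a * w⁻¹) = w * (a * a) * w⁻¹ := by group
      _ = -1 := by rw [hA]; simp
  exact ⟨hA, hB, (relator_iff (-1) neg_one_central (by simp) f hA hB q n).mp hrel⟩

/-- An eigenvector `v` of `AB` yields the basis `(v, A v)` bringing `ρ` into normal form. -/
lemma conj_normalRep_of_eigenvector (n : ℕ) (q : ℤ) (ρ : TwoBridgeGroup (2 * n + 1) q →* SL2)
    (hirr : IsIrreducibleRep ρ) (A B : SL2) (hρA : ρ (PresentedGroup.of 0) = A)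
    (hρB : ρ (PresentedGroup.of 1) = B) (hA : A * A = -1)
    (hC : (A * B) ^ (2 * n + 1) = -1) (ν : ℂˣ) (v : Fin 2 → ℂ) (hv : v ≠ 0)
    (hCv : (A * B).1.mulVec v = (ν : ℂ) • v)
    (hCu : (A * B).1.mulVec (A.1.mulVec v) = (ν : ℂ)⁻¹ • A.1.mulVec v) :
    ∃ h : ν ^ (2 * n + 1) = -1,
      ∃ Q : SL2, ∀ g, ρ g = Q * normalRep n q ν h g * Q⁻¹ := by
  have hpow : ∀ k : ℕ, ((A * B) ^ k).1.mulVec v = ((ν : ℂ) ^ k) • v := by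
    intro k
    induction k with
    | zero => simp
    | succ k ih =>
      rw [pow_succ, Matrix.SpecialLinearGroup.coe_mul, ← Matrix.mulVec_mulVec, hCv,
        Matrix.mulVec_smul, ih, smul_smul, pow_succ, mul_comm]
  have hν : ν ^ (2 * n + 1) = -1 := by
    have h := hpow (2 * n + 1)
    rw [hC, Matrix.SpecialLinearGroup.coe_neg, Matrix.SpecialLinearGroup.coe_one,
      Matrix.neg_mulVec, Matrix.one_mulVec, ← neg_one_smul ℂ v] at h
    exact Units.ext (by simpa using (smul_left_injective ℂ hv h).symm)
  refine ⟨hν, ?_⟩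
  have hAu : A.1.mulVec (A.1.mulVec v) = -v := by
    rw [Matrix.mulVec_mulVec, ← Matrix.SpecialLinearGroup.coe_mul, hA]
    simp [Matrix.neg_mulVec]
  have hBAC : B = -(A * (A * B)) := by rw [← mul_assoc, hA]; simp
  have hdet : v 0 * A.1.mulVec v 1 - v 1 * A.1.mulVec v 0 ≠ 0 := by
    intro h0
    obtain ⟨c, hc⟩ : ∃ c : ℂ, A.1.mulVec v = c • v := by
      by_cases hv0 : v 0 = 0
      · have hv1 : v 1 ≠ 0 := fun hv1 => hv (by ext i; fin_cases i <;> assumption)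
        refine ⟨A.1.mulVec v 1 / v 1, ?_⟩
        ext i
        fin_cases i
        · simp only [Pi.smul_apply, smul_eq_mul, Fin.zero_eta]
          field_simp
          linear_combination -h0
        · simp only [Pi.smul_apply, smul_eq_mul, Fin.mk_one]
          field_simp
      · refine ⟨A.1.mulVec v 0 / v 0, ?_⟩
        ext i
        fin_cases i
        · simp only [Pi.smul_apply, smul_eq_mul, Fin.zero_eta]
          field_simp
        · simp only [Pi.smul_apply, smul_eq_mul, Fin.mk_one]
          field_simp
          linear_combination h0
    refine hirr ⟨v, hv, line_invariant _ _ _ _ hv fun i => ?_⟩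
    fin_cases i
    · exact ⟨c, by rw [← hc, ← hρA]; rfl⟩
    · refine ⟨-(ν * c), ?_⟩
      change (ρ (PresentedGroup.of 1)).1.mulVec v = _
      rw [hρB, hBAC, Matrix.SpecialLinearGroup.coe_neg, Matrix.neg_mulVec,
        Matrix.SpecialLinearGroup.coe_mul, ← Matrix.mulVec_mulVec, hCv, Matrix.mulVec_smul, hc,
        smul_smul, neg_smul]
  set u := A.1.mulVec v with hu
  -- Rescaling `v` by `s` gives the change of basis determinant one.
  obtain ⟨s, hs⟩ := IsAlgClosed.exists_pow_nat_eq (v 0 * u 1 - v 1 * u 0)⁻¹ (n := 2) (by omega)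
  let P : SL2 := ⟨!![s * v 0, s * u 0; s * v 1, s * u 1], by
    rw [Matrix.det_fin_two]
    simp only [Matrix.of_apply, Matrix.cons_val', Matrix.cons_val_zero, Matrix.cons_val_one,
      Matrix.cons_val_fin_one]
    have : s ^ 2 * (v 0 * u 1 - v 1 * u 0) = 1 := by rw [hs, inv_mul_cancel₀ hdet]
    linear_combination this⟩
  have ent : ∀ (M : SL2) (x : Fin 2 → ℂ) (i : Fin 2),
      M.1.mulVec x i = M.1 i 0 * x 0 + M.1 i 1 * x 1 := fun M x i => by
    simp [Matrix.mulVec, dotProduct, Fin.sum_univ_two]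
  have hAP : A * P = P * normalA := by
    apply Subtype.ext
    rw [Matrix.SpecialLinearGroup.coe_mul, Matrix.SpecialLinearGroup.coe_mul]
    ext i j
    have e1 := congrFun hu i
    have e2 := congrFun hAu i
    rw [ent] at e1 e2
    fin_cases i <;> fin_cases j <;>
      simp [P, normalA, Matrix.mul_apply, Fin.sum_univ_two] at e1 e2 ⊢ <;>
      first | linear_combination (-s) * e1 | linear_combination s * e2
  have hCP : A * B * P = P * (normalA * normalB ν) := by
    apply Subtype.ext
    rw [Matrix.SpecialLinearGroup.coe_mul, Matrix.SpecialLinearGroup.coe_mul P,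
      coe_normalA_mul_normalB]
    ext i j
    have e1 := congrFun hCv i
    have e2 := congrFun hCu i
    rw [ent] at e1 e2
    rw [Matrix.mul_diagonal, Matrix.mul_apply, Fin.sum_univ_two]
    generalize (A * B).1 = C at *
    fin_cases i <;> fin_cases j <;>
      simp [P] at e1 e2 ⊢ <;>
      first | linear_combination s * e1 | linear_combination s * e2
  have hBP : B * P = P * normalB ν := by
    apply mul_left_cancel (a := A)
    rw [← mul_assoc, hCP, ← mul_assoc, ← hAP, mul_assoc]
  refine ⟨P, fun g => ?_⟩
  have heq : ρ = (MulAut.conj P).toMonoidHom.comp (normalRep n q ν hν) := by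
    apply PresentedGroup.ext
    intro i
    fin_cases i
    · change ρ (PresentedGroup.of 0) = P * normalRep n q ν hν (PresentedGroup.of 0) * P⁻¹
      rw [hρA, normalRep_zero, ← hAP, mul_inv_cancel_right]
    · change ρ (PresentedGroup.of 1) = P * normalRep n q ν hν (PresentedGroup.of 1) * P⁻¹
      rw [hρB, normalRep_one, ← hBP, mul_inv_cancel_right]
  exact DFunLike.congr_fun heq g

/-- An irreducible trace-free representation is conjugate to a normal form, whose parameter can be
taken to be `μ` or `μ⁻¹` at will. -/
lemma exists_conj_normalRep (n : ℕ) (q : ℤ) (ρ : TwoBridgeGroup (2 * n + 1) q →* SL2)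
    (hirr : IsIrreducibleRep ρ)
    (htr : Matrix.trace (ρ (PresentedGroup.of 0) : Matrix (Fin 2) (Fin 2) ℂ) = 0) :
    ∃ μ : ℂˣ, ∀ ν : ℂˣ, (ν = μ ∨ ν = μ⁻¹) → ∃ h : ν ^ (2 * n + 1) = -1,
      ∃ Q : SL2, ∀ g, ρ g = Q * normalRep n q ν h g * Q⁻¹ := by
  obtain ⟨hA, hB, hC⟩ := generator_relations n q ρ htr
  set A := ρ (PresentedGroup.of 0) with hρA
  set B := ρ (PresentedGroup.of 1) with hρB
  obtain ⟨c, hc⟩ := Module.End.exists_eigenvalue (Matrix.toLin' (A * B).1)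
  obtain ⟨v, hv⟩ := hc.exists_hasEigenvector
  have hv0 : v ≠ 0 := hv.2
  have hCv : (A * B).1.mulVec v = c • v := by
    have := hv.apply_eq_smul
    rwa [Matrix.toLin'_apply] at this
  have hBA : B * A * (A * B) = 1 := by
    rw [mul_assoc, ← mul_assoc A, hA]; simp [hB]
  have hinv : c • (B * A).1.mulVec v = v := by
    rw [← Matrix.mulVec_smul, ← hCv, Matrix.mulVec_mulVec, ← Matrix.SpecialLinearGroup.coe_mul,
      hBA]
    simp
  have hc0 : c ≠ 0 := by
    rintro rfl
    exact hv0 (by simpa using hinv.symm)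
  have hinv' : (B * A).1.mulVec v = c⁻¹ • v := by rw [eq_inv_smul_iff₀ hc0, hinv]
  have hCu : (A * B).1.mulVec (A.1.mulVec v) = c⁻¹ • A.1.mulVec v := by
    rw [Matrix.mulVec_mulVec, ← Matrix.SpecialLinearGroup.coe_mul, mul_assoc,
      Matrix.SpecialLinearGroup.coe_mul, ← Matrix.mulVec_mulVec, hinv', Matrix.mulVec_smul]
  have hAu : A.1.mulVec (A.1.mulVec v) = -v := by
    rw [Matrix.mulVec_mulVec, ← Matrix.SpecialLinearGroup.coe_mul, hA]
    simp [Matrix.neg_mulVec]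
  refine ⟨Units.mk0 c hc0, ?_⟩
  rintro ν (rfl | rfl)
  · exact conj_normalRep_of_eigenvector n q ρ hirr A B rfl rfl hA hC _ v hv0
      (by simpa using hCv) (by simpa using hCu)
  · -- For the inverse parameter, start from the eigenvector `A v` instead of `v`.
    refine conj_normalRep_of_eigenvector n q ρ hirr A B rfl rfl hA hC _ (A.1.mulVec v) ?_
      (by simpa using hCu) ?_
    · intro h0
      rw [h0, Matrix.mulVec_zero] at hAu
      exact hv0 (by simpa using hAu.symm)
    · rw [hAu, Matrix.mulVec_neg, hCv]
      simp

/-! ### Counting -/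

/-- Every `μ ≠ -1` with `μ^(2n+1) = -1` is, up to inversion, one of `-ζ, …, -ζⁿ`. -/
lemma exists_index (n : ℕ) (ζ : ℂˣ) (hζ : IsPrimitiveRoot ζ (2 * n + 1)) (μ : ℂˣ)
    (h : μ ^ (2 * n + 1) = -1) (hμ : μ ≠ -1) :
    ∃ j : Fin n, -ζ ^ (j.1 + 1) = μ ∨ -ζ ^ (j.1 + 1) = μ⁻¹ := by
  have hodd : Odd (2 * n + 1) := ⟨n, rfl⟩
  have h1 : (-(μ : ℂ)) ^ (2 * n + 1) = 1 := by
    rw [hodd.neg_pow]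
    have : (μ : ℂ) ^ (2 * n + 1) = -1 := by
      simpa using congrArg Units.val h
    rw [this, neg_neg]
  obtain ⟨i, hi, hi'⟩ := (IsPrimitiveRoot.coe_units_iff.mpr hζ).eq_pow_of_pow_eq_one h1
  have hi2 : ζ ^ i = -μ := Units.ext (by push_cast; exact hi')
  have hi0 : i ≠ 0 := by
    rintro rfl
    apply hμ
    rw [pow_zero] at hi2
    rw [hi2, neg_neg]
  by_cases hin : i ≤ n
  · refine ⟨⟨i - 1, by omega⟩, Or.inl ?_⟩
    rw [show i - 1 + 1 = i by omega, hi2, neg_neg]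
  · refine ⟨⟨2 * n + 1 - i - 1, by omega⟩, Or.inr ?_⟩
    have : ζ ^ (2 * n + 1 - i) * ζ ^ i = 1 := by
      rw [← pow_add, Nat.sub_add_cancel hi.le, hζ.pow_eq_one]
    rw [hi2] at this
    rw [show 2 * n + 1 - i - 1 + 1 = 2 * n + 1 - i by omega]
    apply eq_inv_of_mul_eq_one_left
    simpa using this

/-- The traces `μ + μ⁻¹` for `μ = -ζ, …, -ζⁿ` are pairwise distinct. -/
lemma index_injective (n : ℕ) (ζ : ℂˣ) (hζ : IsPrimitiveRoot ζ (2 * n + 1)) (i j : Fin n)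
    (h : ((-ζ ^ (i.1 + 1) : ℂˣ) : ℂ) + ((-ζ ^ (i.1 + 1) : ℂˣ) : ℂ)⁻¹ =
      ((-ζ ^ (j.1 + 1) : ℂˣ) : ℂ) + ((-ζ ^ (j.1 + 1) : ℂˣ) : ℂ)⁻¹) : i = j := by
  set a := -ζ ^ (i.1 + 1) with ha
  set b := -ζ ^ (j.1 + 1) with hb
  have hane := a.ne_zero
  have hbne := b.ne_zero
  have hprod : ((a : ℂ) - b) * (a * b - 1) = 0 := by
    field_simp at h
    linear_combination h
  rcases mul_eq_zero.mp hprod with h1 | h1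
  · have : a = b := Units.ext (sub_eq_zero.mp h1)
    rw [ha, hb, neg_inj] at this
    have := hζ.pow_inj (by omega) (by omega) this
    exact Fin.ext (by omega)
  · have : a * b = 1 := Units.ext (by push_cast; exact sub_eq_zero.mp h1)
    rw [ha, hb, neg_mul_neg, ← pow_add] at this
    have := Nat.le_of_dvd (by omega) (hζ.dvd_of_pow_eq_one _ this)
    omega

lemma pow_index (n : ℕ) (ζ : ℂˣ) (hζ : IsPrimitiveRoot ζ (2 * n + 1)) (k : ℕ) :
    (-ζ ^ k) ^ (2 * n + 1) = -1 := by
  rw [Odd.neg_pow ⟨n, rfl⟩, ← pow_mul, mul_comm, pow_mul, hζ.pow_eq_one, one_pow]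

lemma index_ne (n : ℕ) (ζ : ℂˣ) (hζ : IsPrimitiveRoot ζ (2 * n + 1)) (j : Fin n) :
    -ζ ^ (j.1 + 1) ≠ -1 := by
  rw [Ne, neg_inj]
  exact hζ.pow_ne_one_of_pos_of_lt (by omega) (by omega)

lemma irreducible_of_conj {G : Type*} [Group G] (ρ σ : G →* SL2) (Q : SL2)
    (h : ∀ g, ρ g = Q * σ g * Q⁻¹) (hρ : IsIrreducibleRep ρ) : IsIrreducibleRep σ := by
  rintro ⟨v, hv, hinv⟩
  refine hρ ⟨Q.1.mulVec v, fun h0 => hv ?_, fun g => ?_⟩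
  · have : (Q⁻¹ * Q : SL2).1.mulVec v = 0 := by
      rw [Matrix.SpecialLinearGroup.coe_mul, ← Matrix.mulVec_mulVec, h0, Matrix.mulVec_zero]
    simpa using this
  · obtain ⟨c, hc⟩ := hinv g
    refine ⟨c, ?_⟩
    rw [h g, Matrix.mulVec_mulVec, ← Matrix.SpecialLinearGroup.coe_mul, inv_mul_cancel_right,
      Matrix.SpecialLinearGroup.coe_mul, ← Matrix.mulVec_mulVec, hc, Matrix.mulVec_smul]

/-- For coprime odd integers `p > |q| > 0`, every irreducible
`SL(2,ℂ)`-representation of the 2-bridge knot group `Γ_{p,q}` with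
`trace ρ(x₁) = 0` is metabelian, and up to conjugation there are exactly
`(p − 1)/2` such representations. -/
theorem trace_free_section_two_bridge
    (p q : ℤ) (hp : Odd p) (hq : Odd q) (hco : IsCoprime p q)
    (hpq : |q| < p) (hq0 : 0 < |q|) :
    (∀ ρ : TwoBridgeGroup p q →* Matrix.SpecialLinearGroup (Fin 2) ℂ,
      IsIrreducibleRep ρ →
      Matrix.trace (ρ (PresentedGroup.of 0) : Matrix (Fin 2) (Fin 2) ℂ) = 0 →
      IsMetabelianRep ρ) ∧
    Finite (Quotient (conjSetoid
      (fun ρ : TwoBridgeGroup p q →* Matrix.SpecialLinearGroup (Fin 2) ℂ =>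
        IsIrreducibleRep ρ ∧
        Matrix.trace (ρ (PresentedGroup.of 0) : Matrix (Fin 2) (Fin 2) ℂ) = 0))) ∧
    Nat.card (Quotient (conjSetoid
      (fun ρ : TwoBridgeGroup p q →* Matrix.SpecialLinearGroup (Fin 2) ℂ =>
        IsIrreducibleRep ρ ∧
        Matrix.trace (ρ (PresentedGroup.of 0) : Matrix (Fin 2) (Fin 2) ℂ) = 0))) =
      ((p - 1) / 2).toNat := by
  obtain ⟨m, hm⟩ := hp
  lift m to ℕ using (by have := abs_nonneg q; omega) with n
  subst hm
  refine ⟨fun ρ hirr htr => ?_, ?_⟩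
  · obtain ⟨μ, hμ⟩ := exists_conj_normalRep n q ρ hirr htr
    obtain ⟨h, Q, hQ⟩ := hμ μ (Or.inl rfl)
    intro a ha b hb
    have := normalRep_metabelian n q μ h a ha b hb
    rw [hQ a, hQ b]
    calc Q * normalRep n q μ h a * Q⁻¹ * (Q * normalRep n q μ h b * Q⁻¹)
        = Q * (normalRep n q μ h a * normalRep n q μ h b) * Q⁻¹ := by group
      _ = _ := by rw [this]; group
  · obtain ⟨ζ, hζ⟩ : ∃ ζ : ℂˣ, IsPrimitiveRoot ζ (2 * n + 1) := by
      have h := Complex.isPrimitiveRoot_exp (2 * n + 1) (by omega)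
      exact ⟨_, h.isUnit_unit (by omega)⟩
    let F : Fin n → Quotient (conjSetoid
        (fun ρ : TwoBridgeGroup (2 * n + 1) q →* Matrix.SpecialLinearGroup (Fin 2) ℂ =>
          IsIrreducibleRep ρ ∧
          Matrix.trace (ρ (PresentedGroup.of 0) : Matrix (Fin 2) (Fin 2) ℂ) = 0)) := fun j =>
      Quotient.mk _ ⟨normalRep n q (-ζ ^ (j.1 + 1)) (pow_index n ζ hζ _),
        normalRep_irreducible n q _ _ (index_ne n ζ hζ j), normalRep_trace_zero n q _ _⟩
    have hF : Function.Bijective F := by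
      constructor
      · intro i j hij
        obtain ⟨Q, hQ⟩ := Quotient.exact hij
        apply index_injective n ζ hζ
        rw [← normalRep_trace_mul n q _ (pow_index n ζ hζ _),
          ← normalRep_trace_mul n q _ (pow_index n ζ hζ _)]
        have := hQ (PresentedGroup.of 0 * PresentedGroup.of 1)
        dsimp only at this
        rw [this, Matrix.SpecialLinearGroup.coe_mul, Matrix.trace_mul_comm,
          ← Matrix.SpecialLinearGroup.coe_mul, ← mul_assoc, inv_mul_cancel, one_mul]
      · intro c
        induction c using Quotient.inductionOn with
        | _ ρ =>
        obtain ⟨ρ, hirr, htr⟩ := ρ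
        obtain ⟨μ, hμ⟩ := exists_conj_normalRep n q ρ hirr htr
        obtain ⟨h, Q, hQ⟩ := hμ μ (Or.inl rfl)
        have hne : μ ≠ -1 := by
          rintro rfl
          exact normalRep_neg_one_reducible n q h (irreducible_of_conj _ _ Q hQ hirr)
        obtain ⟨j, hj⟩ := exists_index n ζ hζ μ h hne
        obtain ⟨h', R, hR⟩ := hμ _ hj
        exact ⟨j, Quotient.sound ⟨R, hR⟩⟩
    refine ⟨Finite.of_surjective F hF.2, ?_⟩
    rw [← Nat.card_congr (Equiv.ofBijective F hF), Nat.card_fin]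
    omega
end
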